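/- arXiv:math/0011151 — 13 statements merged into one kernel-verified Lean document; each statement's English description precedes it below -/
import Mathlib

section
/- A polynomial p ∈ ℂ[Z_1, …, Z_n] is A_r(n)-invariant if and only if p lies in the ℂ-subalgebra generated by the monomials X := Z_1·Z_2⋯Z_n and Y_j := Z_j^{r+1} for j = 1, …, n. -/
open MvPolynomial

/-!
A diagonal substitution `Z_j ↦ ε_j Z_j` multiplies the coefficient of `Z^d` by `∏ ε_j ^ d_j`
(`coeff_aeval_C_mul_X`), so invariance is a condition on each exponent `d` in the support
separately. For a primitive `(r+1)`-st root of unity `ζ`, the tuple with `ζ` in position `i`,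
`ζ⁻¹` in position `j` and `1` elsewhere lies in the group and forces `d i ≡ d j [MOD r + 1]`
(`modEq_of_invariant`). Hence all `d j` have a common remainder `k` modulo `r + 1`, and
`Z^d = (∏ Z_j) ^ k * ∏ (Z_j ^ (r+1)) ^ (d j / (r+1))` (`monomial_mem_adjoin`).
The converse holds because each generator is visibly invariant.
-/

theorem coeff_aeval_C_mul_X {n : ℕ} (ε : Fin n → ℂ) (p : MvPolynomial (Fin n) ℂ)
    (d : Fin n →₀ ℕ) :
    coeff d (aeval (fun j => C (ε j) * X j) p : MvPolynomial (Fin n) ℂ)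
      = (∏ j, ε j ^ d j) * coeff d p := by
  induction p using MvPolynomial.induction_on' with
  | monomial u a =>
    have h : (aeval (fun j => C (ε j) * X j) (monomial u a) : MvPolynomial (Fin n) ℂ)
        = C (∏ j, ε j ^ u j) * monomial u a := by
      rw [aeval_monomial, monomial_eq, Finsupp.prod_fintype _ _ (by simp),
        Finsupp.prod_fintype _ _ (by simp)]
      simp only [mul_pow, Finset.prod_mul_distrib, map_prod, map_pow, algebraMap_eq]
      ring
    rw [h, coeff_C_mul, coeff_monomial]
    split_ifs with hud
    · rw [hud]
    · simp
  | add p q hp hq => simp only [map_add, coeff_add, hp, hq, mul_add]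

/-- In an invariant polynomial, every exponent in the support has all its entries congruent
modulo `r + 1`: compare coefficients under the tuple with `ζ` at `i` and `ζ⁻¹` at `j`. -/
theorem modEq_of_invariant {n r : ℕ} {p : MvPolynomial (Fin n) ℂ}
    (h : ∀ ε : Fin n → ℂ, (∀ j, ε j ^ (r + 1) = 1) → (∏ j, ε j) = 1 →
      aeval (fun j => C (ε j) * X j) p = p)
    {d : Fin n →₀ ℕ} (hd : coeff d p ≠ 0) (i j : Fin n) : d i ≡ d j [MOD r + 1] := by
  obtain ⟨ζ, hζ⟩ : ∃ ζ : ℂ, IsPrimitiveRoot ζ (r + 1) :=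
    ⟨_, Complex.isPrimitiveRoot_exp (r + 1) (Nat.succ_ne_zero r)⟩
  have hζ0 : ζ ≠ 0 := hζ.ne_zero (Nat.succ_ne_zero r)
  have hpow (a : Fin n) (z : ℂ) (e : Fin n → ℕ) (k : Fin n) :
      (Pi.mulSingle a z : Fin n → ℂ) k ^ e k = (Pi.mulSingle a (z ^ e a) : Fin n → ℂ) k := by
    by_cases hk : k = a
    · subst hk; simp
    · simp [hk]
  -- For `i = j` this tuple is identically `1`, so that case needs no separate treatment.
  have key := h (fun k => (Pi.mulSingle i ζ : Fin n → ℂ) k * (Pi.mulSingle j ζ⁻¹ : Fin n → ℂ) k)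
    (fun k => by
      rw [mul_pow, hpow i ζ (fun _ => r + 1), hpow j ζ⁻¹ (fun _ => r + 1)]
      simp [hζ.pow_eq_one])
    (by simp [Finset.prod_mul_distrib, hζ0])
  have hc := congrArg (coeff d) key
  rw [coeff_aeval_C_mul_X] at hc
  have h1 := mul_right_cancel₀ hd (hc.trans (one_mul _).symm)
  simp only [mul_pow, Finset.prod_mul_distrib, hpow _ _ d] at h1
  have h2 : ζ ^ d i = ζ ^ d j := by
    simpa [mul_inv_eq_one₀ (pow_ne_zero _ hζ0)] using h1
  rw [hζ.eq_orderOf]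
  exact (hζ.isOfFinOrder (Nat.succ_ne_zero r)).pow_eq_pow_iff_modEq.mp h2

/-- A monomial whose exponents are congruent modulo `r + 1` lies in the subalgebra; the power of
`∏ Z_j` is the common remainder, read off at the index `0`. -/
theorem monomial_mem_adjoin {n r : ℕ} {d : Fin n →₀ ℕ}
    (hd : ∀ i j, d i ≡ d j [MOD r + 1]) (hn : 0 < n) (c : ℂ) :
    monomial d c ∈ Algebra.adjoin ℂ
        (insert (∏ j, (X j : MvPolynomial (Fin n) ℂ))
          (Set.range fun j : Fin n => (X j : MvPolynomial (Fin n) ℂ) ^ (r + 1))) := by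
  have h : monomial d c = C c * ((∏ j, (X j : MvPolynomial (Fin n) ℂ)) ^ (d ⟨0, hn⟩ % (r + 1))
      * ∏ j, ((X j : MvPolynomial (Fin n) ℂ) ^ (r + 1)) ^ (d j / (r + 1))) := by
    rw [monomial_eq, Finsupp.prod_fintype _ _ (by simp), ← Finset.prod_pow,
      ← Finset.prod_mul_distrib]
    congr 1
    refine Finset.prod_congr rfl fun j _ => ?_
    rw [← pow_mul, ← pow_add, hd ⟨0, hn⟩ j, Nat.mod_add_div]
  rw [h]
  refine mul_mem (Subalgebra.algebraMap_mem _ c) (mul_mem (pow_mem ?_ _)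
    (prod_mem fun j _ => pow_mem ?_ _))
  · exact Algebra.subset_adjoin (Set.mem_insert _ _)
  · exact Algebra.subset_adjoin (Set.mem_insert_of_mem _ ⟨j, rfl⟩)

/-- A polynomial `p ∈ ℂ[Z_1,…,Z_n]` is `A_r(n)`-invariant iff it lies in the subalgebra
generated by `X = Z_1⋯Z_n` and `Y_j = Z_j^{r+1}`. -/
theorem Ar_invariant_iff_mem_adjoin (n r : ℕ) (hn : 2 ≤ n) (hr : 1 ≤ r)
    (p : MvPolynomial (Fin n) ℂ) :
    (∀ ε : Fin n → ℂ, (∀ j, ε j ^ (r + 1) = 1) → (∏ j, ε j) = 1 →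
      MvPolynomial.aeval (fun j => MvPolynomial.C (ε j) * MvPolynomial.X j) p = p)
    ↔ p ∈ Algebra.adjoin ℂ
        (insert (∏ j, (MvPolynomial.X j : MvPolynomial (Fin n) ℂ))
          (Set.range fun j : Fin n => (MvPolynomial.X j : MvPolynomial (Fin n) ℂ) ^ (r + 1))) := by
  constructor
  · intro h
    rw [p.as_sum]
    exact sum_mem fun d hd => monomial_mem_adjoin
      (modEq_of_invariant h (mem_support_iff.mp hd)) (by omega) _
  · intro hp ε hε hprod
    induction hp using Algebra.adjoin_induction with
    | mem x hx =>
      rcases hx with rfl | ⟨j, rfl⟩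
      · simp only [map_prod, aeval_X, Finset.prod_mul_distrib]
        rw [← map_prod, hprod, map_one, one_mul]
      · simp only [map_pow, aeval_X, mul_pow]
        rw [← map_pow, hε, map_one, one_mul]
    | algebraMap c => exact AlgHom.commutes _ c
    | add x y _ _ hx hy => rw [map_add, hx, hy]
    | mul x y _ _ hx hy => rw [map_mul, hx, hy]
end

section
/- The quotient ℂ^n/A_r(n) is the hypersurface x^{r+1} = y_1⋯y_n. Concretely: for integers r ≥ 1 and n ≥ 2, the kernel of the ℂ-algebra homomorphism φ : ℂ[x, y_1, …, y_n] → ℂ[Z_1, …, Z_n] determined by φ(x) = Z_1·Z_2⋯Z_n and φ(y_j) = Z_j^{r+1} (j = 1, …, n) is the principal ideal generated by x^{r+1} − y_1·y_2⋯y_n. -/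
open MvPolynomial

/-!
The generator is visibly killed by `φ`. For the converse inclusion let `I` be the ideal it generates.
Every monomial is congruent modulo `I` to one whose exponent of `x` is at most `r`
(trade `x ^ (r + 1)` for `∏ y_j`), and such a reduced monomial `x ^ c * ∏ y_j ^ b_j` can be read off
from its image `∏ Z_j ^ (c + (r + 1) * b_j)` by Euclidean division of the exponents by `r + 1`.
Reading off exponents in this way defines a linear map `ArQuotient.readOff` from `ℂ[Z_1, …, Z_n]` to
the quotient by `I`, and its composite with `φ` is the quotient map
(`ArQuotient.readOff_comp_apply`). Hence anything killed by `φ` lies in `I`.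
-/

namespace ArQuotient

/-- A monomial in the variables `x = X none` and `y_j = X (some j)` as an explicit product. -/
lemma monomial_option_eq {n : ℕ} (m : Option (Fin n) →₀ ℕ) :
    (monomial m 1 : MvPolynomial (Option (Fin n)) ℂ)
      = X none ^ m none * ∏ j, X (some j) ^ m (some j) := by
  rw [monomial_eq, Finsupp.prod_fintype _ _ (fun _ => pow_zero _), Fintype.prod_option, C_1, one_mul]

/-- The linear map `ℂ[Z] → ℂ[x, y] / I` sending `Z ^ a` to the class of
`x ^ (a i₀ % (r + 1)) * ∏ y_j ^ (a j / (r + 1))`. The index `i₀` is an arbitrary choice: for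
monomials in the image of `φ`, all the `a j` are congruent modulo `r + 1`. -/
noncomputable def readOff {n : ℕ} (r : ℕ) (i₀ : Fin n)
    (I : Ideal (MvPolynomial (Option (Fin n)) ℂ)) :
    MvPolynomial (Fin n) ℂ →ₗ[ℂ] MvPolynomial (Option (Fin n)) ℂ ⧸ I :=
  (basisMonomials (Fin n) ℂ).constr ℂ fun a =>
    Ideal.Quotient.mk I (X none ^ (a i₀ % (r + 1)) * ∏ j, X (some j) ^ (a j / (r + 1)))

lemma readOff_monomial {n : ℕ} (r : ℕ) (i₀ : Fin n)
    (I : Ideal (MvPolynomial (Option (Fin n)) ℂ)) (a : Fin n →₀ ℕ) :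
    readOff r i₀ I (monomial a 1)
      = Ideal.Quotient.mk I (X none ^ (a i₀ % (r + 1)) * ∏ j, X (some j) ^ (a j / (r + 1))) := by
  have h : (monomial a 1 : MvPolynomial (Fin n) ℂ) = basisMonomials (Fin n) ℂ a := by
    rw [coe_basisMonomials]
  rw [readOff, h, Module.Basis.constr_basis]

/-- If `x ^ (r + 1) ≡ ∏ y_j` modulo `I`, then `readOff` undoes `φ` modulo `I`. -/
lemma readOff_comp_apply {n : ℕ} (r : ℕ) (i₀ : Fin n)
    (I : Ideal (MvPolynomial (Option (Fin n)) ℂ))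
    (hI : X none ^ (r + 1) - ∏ j : Fin n, X (some j) ∈ I)
    (φ : MvPolynomial (Option (Fin n)) ℂ →ₐ[ℂ] MvPolynomial (Fin n) ℂ)
    (hx : φ (X none) = ∏ j, X j) (hy : ∀ j, φ (X (some j)) = X j ^ (r + 1))
    (p : MvPolynomial (Option (Fin n)) ℂ) :
    readOff r i₀ I (φ p) = Ideal.Quotient.mk I p := by
  have hrel : Ideal.Quotient.mk I (X none) ^ (r + 1)
      = ∏ j : Fin n, Ideal.Quotient.mk I (X (some j)) := by
    rw [← map_pow, ← map_prod]
    exact Ideal.Quotient.eq.mpr hI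
  have hmon : ∀ m : Option (Fin n) →₀ ℕ,
      readOff r i₀ I (φ (monomial m 1)) = Ideal.Quotient.mk I (monomial m 1) := by
    intro m
    have hφ : φ (monomial m 1) = monomial
        (Finsupp.equivFunOnFinite.symm fun j => m none + (r + 1) * m (some j)) 1 := by
      rw [monomial_option_eq, monomial_eq, Finsupp.prod_fintype _ _ (fun _ => pow_zero _), C_1,
        one_mul, map_mul, map_pow, map_prod, hx, ← Finset.prod_pow, ← Finset.prod_mul_distrib]
      refine Finset.prod_congr rfl fun j _ => ?_
      simp [hy, pow_add, pow_mul]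
    rw [hφ, readOff_monomial, monomial_option_eq]
    have hdiv : ∀ j, (m none + (r + 1) * m (some j)) / (r + 1)
        = m none / (r + 1) + m (some j) := fun j => Nat.add_mul_div_left _ _ r.succ_pos
    simp only [Finsupp.equivFunOnFinite_symm_apply_apply, Nat.add_mul_mod_self_left, hdiv,
      map_mul, map_pow, map_prod, pow_add _ (m none / (r + 1)), Finset.prod_mul_distrib,
      Finset.prod_pow]
    rw [← hrel, ← mul_assoc, ← pow_mul, ← pow_add, Nat.mod_add_div]
  have hlin : readOff r i₀ I ∘ₗ φ.toLinearMap = (Ideal.Quotient.mkₐ ℂ I).toLinearMap :=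
    (basisMonomials _ ℂ).ext fun m => by simpa using hmon m
  exact LinearMap.congr_fun hlin p

end ArQuotient

/-- The kernel of the ℂ-algebra map `φ : ℂ[x, y_1, …, y_n] → ℂ[Z_1, …, Z_n]` with
`φ(x) = Z_1⋯Z_n` and `φ(y_j) = Z_j^{r+1}` is the principal ideal generated by
`x^{r+1} − y_1⋯y_n`.  (Here the variable `x` is indexed by `none` and `y_j` by `some j`.) -/
theorem Ar_quotient_hypersurface (n r : ℕ) (hn : 2 ≤ n) (hr : 1 ≤ r) :
    RingHom.ker
      (MvPolynomial.aeval
        (fun v : Option (Fin n) =>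
          Option.elim v (∏ j, (MvPolynomial.X j : MvPolynomial (Fin n) ℂ))
            (fun j => (MvPolynomial.X j : MvPolynomial (Fin n) ℂ) ^ (r + 1))) :
        MvPolynomial (Option (Fin n)) ℂ →ₐ[ℂ] MvPolynomial (Fin n) ℂ)
    = Ideal.span {MvPolynomial.X (none : Option (Fin n)) ^ (r + 1)
        - ∏ j : Fin n, MvPolynomial.X (some j)} := by
  have hker : ∀ φ : MvPolynomial (Option (Fin n)) ℂ →ₐ[ℂ] MvPolynomial (Fin n) ℂ,
      φ (X none) = ∏ j, X j → (∀ j, φ (X (some j)) = X j ^ (r + 1)) →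
      RingHom.ker φ = Ideal.span {X none ^ (r + 1) - ∏ j : Fin n, X (some j)} := by
    intro φ hx hy
    apply le_antisymm
    · intro p hp
      rw [← Ideal.Quotient.eq_zero_iff_mem, ← ArQuotient.readOff_comp_apply r ⟨0, by omega⟩ _
        (Ideal.mem_span_singleton_self _) φ hx hy p, (RingHom.mem_ker).mp hp, map_zero]
    · rw [Ideal.span_singleton_le_iff_mem, RingHom.mem_ker, map_sub, map_pow, map_prod, hx]
      simp only [hy, Finset.prod_pow, sub_self]
  exact hker _ (by simp) (by simp)
end

section
/- The ideal I(o) of ℂ[Z_1, …, Z_n] generated by all A_r(n)-invariant polynomials with zero constant term equals the ideal generated by the n+1 monomials Z_1^{r+1}, …, Z_n^{r+1} and Z_1·Z_2⋯Z_n. -/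
open MvPolynomial

/-!
The group acts diagonally, scaling the monomial `Z^m` by the character `∏ ε_j ^ m_j`, so every
monomial occurring in an invariant polynomial is itself invariant (`coeff_diagonal`). Let `Z^m` be
a nonconstant invariant monomial. If every exponent is positive, `Z_1⋯Z_n` divides it. Otherwise
some `m_k = 0`; testing invariance on the element with `ζ` in place `i ≠ k` and `ζ⁻¹` in place `k`,
for `ζ` a primitive `(r+1)`-th root of unity, gives `ζ ^ m_i = 1`, so `r + 1 ∣ m_i` for every `i`
(`dvd_of_character_trivial`), and `Z_i^{r+1}` divides `Z^m` for any `i` with `m_i ≠ 0`.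
Conversely the `n + 1` listed monomials are visibly invariant without constant term.
-/

lemma monomial_eq_C_mul_prod {n : ℕ} (m : Fin n →₀ ℕ) (a : ℂ) :
    monomial m a = C a * ∏ j, (X j : MvPolynomial (Fin n) ℂ) ^ m j := by
  rw [monomial_eq, Finsupp.prod_fintype _ _ (fun i => pow_zero _)]

/-- The diagonal substitution `Z_j ↦ ε_j Z_j` scales the coefficient of `Z^m` by `∏ ε_j ^ m_j`. -/
lemma coeff_diagonal {n : ℕ} (ε : Fin n → ℂ) (p : MvPolynomial (Fin n) ℂ) (m : Fin n →₀ ℕ) :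
    coeff m (aeval (fun j => C (ε j) * X j) p : MvPolynomial (Fin n) ℂ)
      = (∏ j, ε j ^ m j) * coeff m p := by
  induction p using MvPolynomial.induction_on' with
  | monomial u a =>
    have h : (aeval (fun j => C (ε j) * X j) (monomial u a) : MvPolynomial (Fin n) ℂ)
        = monomial u ((∏ j, ε j ^ u j) * a) := by
      rw [aeval_monomial, Finsupp.prod_fintype _ _ (fun i => pow_zero _), monomial_eq_C_mul_prod]
      simp only [mul_pow, Finset.prod_mul_distrib, algebraMap_eq, map_mul, map_prod, map_pow]
      ring
    rw [h, coeff_monomial, coeff_monomial]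
    split_ifs with hu
    · rw [hu]
    · simp
  | add p q hp hq => rw [map_add, coeff_add, coeff_add, hp, hq, mul_add]

/-- If the character of an exponent vector `m` is trivial on `A_r(n)` and one entry of `m`
vanishes, then all entries are multiples of `r + 1`. -/
lemma dvd_of_character_trivial {n r : ℕ} (m : Fin n → ℕ)
    (h : ∀ ε : Fin n → ℂ, (∀ j, ε j ^ (r + 1) = 1) → (∏ j, ε j) = 1 → ∏ j, ε j ^ m j = 1)
    {k : Fin n} (hk : m k = 0) (i : Fin n) : r + 1 ∣ m i := by
  by_cases hik : i = k
  · simp [hik, hk]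
  have hζ := Complex.isPrimitiveRoot_exp (r + 1) r.succ_ne_zero
  set ζ := Complex.exp (2 * Real.pi * Complex.I / ((r + 1 : ℕ) : ℂ))
  have hζ0 : ζ ≠ 0 := hζ.ne_zero r.succ_ne_zero
  have hpair : ∀ e : Fin n → ℕ,
      ∏ j, ((Pi.mulSingle i ζ : Fin n → ℂ) j * (Pi.mulSingle k ζ⁻¹ : Fin n → ℂ) j) ^ e j
        = ζ ^ e i * ζ⁻¹ ^ e k := by
    intro e
    simp_rw [mul_pow]
    rw [Finset.prod_mul_distrib, Finset.prod_eq_single i, Finset.prod_eq_single k]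
    all_goals simp +contextual
  have key := h (fun j => (Pi.mulSingle i ζ : Fin n → ℂ) j * (Pi.mulSingle k ζ⁻¹ : Fin n → ℂ) j) ?_ ?_
  · rw [hpair, hk, pow_zero, mul_one] at key
    exact hζ.dvd_of_pow_eq_one _ key
  · intro j
    rw [mul_pow]
    simp only [Pi.mulSingle_apply]
    split_ifs <;> simp [hζ.pow_eq_one]
  · have := hpair (fun _ => 1)
    simpa [hζ0] using this

/-- The ideal `I(o)` generated by all `A_r(n)`-invariant polynomials with zero constant
term equals the ideal generated by `Z_1^{r+1}, …, Z_n^{r+1}` and `Z_1⋯Z_n`. -/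
theorem Ar_ideal_of_origin (n r : ℕ) (hn : 2 ≤ n) (hr : 1 ≤ r) :
    Ideal.span {p : MvPolynomial (Fin n) ℂ |
        (∀ ε : Fin n → ℂ, (∀ j, ε j ^ (r + 1) = 1) → (∏ j, ε j) = 1 →
          MvPolynomial.aeval (fun j => MvPolynomial.C (ε j) * MvPolynomial.X j) p = p)
        ∧ MvPolynomial.constantCoeff p = 0}
    = Ideal.span
        ((Set.range fun j : Fin n => (MvPolynomial.X j : MvPolynomial (Fin n) ℂ) ^ (r + 1))
          ∪ {∏ j, (MvPolynomial.X j : MvPolynomial (Fin n) ℂ)}) := by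
  apply le_antisymm
  · rw [Ideal.span_le]
    rintro p ⟨hinv, h0⟩
    rw [SetLike.mem_coe, p.as_sum]
    refine Ideal.sum_mem _ fun m hm => ?_
    rw [mem_support_iff] at hm
    have hchar : ∀ ε : Fin n → ℂ, (∀ j, ε j ^ (r + 1) = 1) → (∏ j, ε j) = 1 →
        ∏ j, ε j ^ m j = 1 := by
      intro ε h1 h2
      have h := coeff_diagonal ε p m
      rw [hinv ε h1 h2] at h
      exact mul_right_cancel₀ hm (by rw [one_mul, ← h])
    rw [monomial_eq_C_mul_prod]
    apply Ideal.mul_mem_left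
    by_cases hpos : ∀ j, m j ≠ 0
    · refine Ideal.mem_of_dvd _ ?_ (Ideal.subset_span (Or.inr rfl))
      exact Finset.prod_dvd_prod_of_dvd _ _ fun j _ => dvd_pow_self _ (hpos j)
    · push Not at hpos
      obtain ⟨k, hk⟩ := hpos
      have hm0 : m ≠ 0 := by
        rintro rfl
        exact hm h0
      obtain ⟨i, hi⟩ := Finsupp.ne_iff.mp hm0
      have hle : r + 1 ≤ m i :=
        Nat.le_of_dvd (Nat.pos_of_ne_zero hi) (dvd_of_character_trivial m hchar hk i)
      refine Ideal.mem_of_dvd _ ?_ (Ideal.subset_span (Or.inl ⟨i, rfl⟩))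
      exact (pow_dvd_pow _ hle).trans
        (Finset.dvd_prod_of_mem (fun j => (X j : MvPolynomial (Fin n) ℂ) ^ m j)
          (Finset.mem_univ i))
  · apply Ideal.span_mono
    rintro _ (⟨j, rfl⟩ | rfl)
    · refine ⟨fun ε h1 _ => ?_, by simp⟩
      rw [map_pow, aeval_X, mul_pow, ← C_pow, h1 j, C_1, one_mul]
    · refine ⟨fun ε _ h2 => ?_, ?_⟩
      · rw [map_prod]
        simp only [aeval_X]
        rw [Finset.prod_mul_distrib, ← map_prod, h2, C_1, one_mul]
      · rw [map_prod]
        exact Finset.prod_eq_zero (Finset.mem_univ ⟨0, by omega⟩) (constantCoeff_X _ _)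
end

section
/- Let r ≥ 1, n ≥ 2, and let I = (i^1, …, i^n) ∈ ℕ^n satisfy 0 ≤ i^s ≤ r for all s and i^t = 0 for some t. For each j ∈ {1, …, n} define K_j ∈ ℕ^n by (K_j)^s = r + 1 − i^j + i^s if i^s < i^j, and (K_j)^s = i^s − i^j otherwise. Then for K = (k^1, …, k^n) ∈ ℕ^n, the following are equivalent: (a) 0 ≤ k^s ≤ r for all s, k^t = 0 for some t, and there exists an integer c with k^s ≡ i^s + c (mod r+1) for all s; (b) K = K_j for some j ∈ {1, …, n}. (This describes the monomial generators of the character eigenspace of I(o)^⊥ containing Z^I for the group A_r(n).) -/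
/-!
The vector `K_j` is the reduction of `I - i^j (1, …, 1)` modulo `r + 1` to residues in
`[0, r]` (`residue_lt`, `residue_modEq`), so it is equivalent to `I` with shift `c = -i^j`,
and its `j`-th entry vanishes. Conversely, if `K` is equivalent to `I` with shift `c` and
`k^t = 0`, then `c ≡ -i^t`, so `k^s ≡ i^s - i^t ≡ (K_t)^s` for all `s`; both `k^s` and
`(K_t)^s` lie in `[0, r]`, hence they are equal.
-/

theorem residue_lt {r a b : ℕ} (ha : a ≤ r) :
    (if a < b then r + 1 - b + a else a - b) < r + 1 := by
  split_ifs <;> omega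

theorem residue_modEq {r a b : ℕ} (hb : b ≤ r) :
    ((if a < b then r + 1 - b + a else a - b : ℕ) : ℤ) ≡ (a : ℤ) + -(b : ℤ)
      [ZMOD ((r : ℤ) + 1)] := by
  apply Int.modEq_iff_dvd.mpr
  split_ifs
  · exact ⟨-1, by omega⟩
  · exact ⟨0, by omega⟩

/-- Description of the monomial generators of the character eigenspace of `I(o)^⊥`
containing `Z^I`, for the group `A_r(n)`.  For `I` with all entries `≤ r` and some entry
zero, an exponent vector `K` has all entries `≤ r`, some entry zero, and is
`A_r(n)`-equivalent to `I` iff `K = K_j` for some `j`, where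
`(K_j)^s = r+1-i^j+i^s` if `i^s < i^j` and `(K_j)^s = i^s - i^j` otherwise. -/
theorem Ar_eigenspace_generators (n r : ℕ) (hn : 2 ≤ n) (hr : 1 ≤ r)
    (I : Fin n → ℕ) (hIr : ∀ s, I s ≤ r) (hI0 : ∃ t, I t = 0) (K : Fin n → ℕ) :
    ((∀ s, K s ≤ r) ∧ (∃ t, K t = 0) ∧
      ∃ c : ℤ, ∀ s, (K s : ℤ) ≡ (I s : ℤ) + c [ZMOD ((r : ℤ) + 1)])
    ↔ ∃ j : Fin n,
        K = fun s => if I s < I j then r + 1 - I j + I s else I s - I j := by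
  constructor
  · rintro ⟨hK, ⟨t, ht⟩, c, hc⟩
    refine ⟨t, funext fun s => ?_⟩
    -- Reading the congruence at `t`, where `K` vanishes, determines the shift.
    have hct : -(I t : ℤ) ≡ c [ZMOD ((r : ℤ) + 1)] := by
      simpa [ht] using (hc t).add_left (-(I t : ℤ))
    have h := (hc s).trans ((hct.add_left (I s : ℤ)).symm.trans
      (residue_modEq (hIr t)).symm)
    have h' : K s ≡ (if I s < I t then r + 1 - I t + I s else I s - I t) [MOD (r + 1)] :=
      Int.natCast_modEq_iff.mp (by exact_mod_cast h)
    exact h'.eq_of_lt_of_lt (Nat.lt_succ_of_le (hK s)) (residue_lt (hIr s))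
  · rintro ⟨j, rfl⟩
    exact ⟨fun s => Nat.le_of_lt_succ (residue_lt (hIr s)), ⟨j, by simp⟩,
      -(I j : ℤ), fun s => residue_modEq (hIr j)⟩
end

section
/- For n ≥ 2, the vectors e^1, v^{1,2}, v^{1,3}, …, v^{1,n} form a ℤ-basis of the lattice N = {x ∈ ℚ^n : 2x ∈ ℤ^n and x_1 + x_2 + ⋯ + x_n ∈ ℤ}, where e^j is the j-th standard basis vector and v^{1,j} = (e^1 + e^j)/2. -/
/-!
The first coordinate of `∑ j, c j • b j` is `c 0 + (∑ i, c i.succ) / 2` and the coordinate at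
`i.succ` is `c i.succ / 2` (`combination_zero`, `combination_succ`). Hence `x` is the combination
with coefficients `c` exactly when `c i.succ = 2 x_{i+1}` and `c 0 = 2 x_0 - ∑ x_i`, so `c` is
determined by `x`, and it is integral precisely because `x` lies in the lattice.
-/

theorem combination_zero {k : ℕ} {b : Fin (k + 1) → Fin (k + 1) → ℚ}
    (h0 : b 0 = Pi.single 0 1)
    (hs : ∀ i : Fin k, b i.succ = (1 / 2 : ℚ) • (Pi.single 0 1 + Pi.single i.succ 1))
    (c : Fin (k + 1) → ℤ) :
    (∑ j, c j • b j) 0 = c 0 + (∑ i : Fin k, (c i.succ : ℚ)) / 2 := by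
  simp [Fin.sum_univ_succ, h0, hs, Finset.sum_apply, Finset.sum_mul,
    (Fin.succ_ne_zero _).symm, div_eq_mul_inv]

theorem combination_succ {k : ℕ} {b : Fin (k + 1) → Fin (k + 1) → ℚ}
    (h0 : b 0 = Pi.single 0 1)
    (hs : ∀ i : Fin k, b i.succ = (1 / 2 : ℚ) • (Pi.single 0 1 + Pi.single i.succ 1))
    (c : Fin (k + 1) → ℤ) (i : Fin k) :
    (∑ j, c j • b j) i.succ = c i.succ / 2 := by
  simp [Fin.sum_univ_succ, h0, hs, Finset.sum_apply, Pi.single_apply, div_eq_mul_inv]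

/-- For `n ≥ 2`, the vectors `e^1, v^{1,2}, …, v^{1,n}` (where `v^{1,j} = (e^1+e^j)/2`)
form a ℤ-basis of the lattice `N = {x ∈ ℚ^n : 2x ∈ ℤ^n, ∑ x_i ∈ ℤ}`: each of them lies
in `N`, and every element of `N` is a unique ℤ-linear combination of them. -/
theorem A1n_lattice_basis (n : ℕ) (hn : 2 ≤ n)
    (b : Fin n → Fin n → ℚ)
    (hb : ∀ j : Fin n, b j = if j = (⟨0, by omega⟩ : Fin n)
        then Pi.single (⟨0, by omega⟩ : Fin n) (1 : ℚ)
        else (1 / 2 : ℚ) • (Pi.single (⟨0, by omega⟩ : Fin n) (1 : ℚ) + Pi.single j 1)) :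
    (∀ j : Fin n, b j ∈
        {y : Fin n → ℚ | (∀ i, ∃ m : ℤ, 2 * y i = (m : ℚ)) ∧ ∃ m : ℤ, ∑ i, y i = (m : ℚ)})
    ∧ ∀ x ∈ {y : Fin n → ℚ | (∀ i, ∃ m : ℤ, 2 * y i = (m : ℚ)) ∧ ∃ m : ℤ, ∑ i, y i = (m : ℚ)},
        ∃! c : Fin n → ℤ, x = ∑ j : Fin n, c j • b j := by
  obtain ⟨k, rfl⟩ : ∃ k, n = k + 1 := ⟨n - 1, by omega⟩
  have h0 : b 0 = Pi.single 0 1 := by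
    rw [hb]; exact if_pos rfl
  have hs : ∀ i : Fin k, b i.succ = (1 / 2 : ℚ) • (Pi.single 0 1 + Pi.single i.succ 1) := by
    intro i
    rw [hb]; exact if_neg (Fin.succ_ne_zero i)
  refine ⟨fun j => ?_, ?_⟩
  · cases j using Fin.cases with
    | zero =>
      rw [h0]
      refine ⟨fun i => ⟨if i = 0 then 2 else 0, ?_⟩, 1, by simp⟩
      by_cases h : i = 0 <;> simp [h]
    | succ j =>
      rw [hs]
      refine ⟨fun i => ⟨(if i = 0 then 1 else 0) + (if i = j.succ then 1 else 0), ?_⟩, 1, ?_⟩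
      · simp [Pi.single_apply]
      · simp only [Pi.smul_apply, Pi.add_apply, smul_eq_mul, ← Finset.mul_sum,
          Finset.sum_add_distrib, Finset.sum_pi_single', Finset.mem_univ, if_true]
        norm_num
  · rintro x ⟨hx, s, hxs⟩
    choose m hm using hx
    rw [Fin.sum_univ_succ] at hxs
    refine ⟨Fin.cons (m 0 - s) fun i => m i.succ, ?_, fun c hc => ?_⟩
    · funext i
      cases i using Fin.cases with
      | zero =>
        rw [combination_zero h0 hs]
        simp only [Fin.cons_zero, Fin.cons_succ, ← hm, ← Finset.mul_sum, Int.cast_sub, ← hxs]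
        ring
      | succ i =>
        rw [combination_succ h0 hs, Fin.cons_succ, ← hm]
        ring
    · have hc' : ∀ i : Fin k, (c i.succ : ℚ) = 2 * x i.succ := fun i => by
        rw [hc, combination_succ h0 hs]
        ring
      have hc0 : x 0 = c 0 + (∑ i : Fin k, (c i.succ : ℚ)) / 2 := by
        rw [← combination_zero h0 hs, ← hc]
      simp only [hc', ← Finset.mul_sum] at hc0
      funext i
      cases i using Fin.cases with
      | zero =>
        rw [Fin.cons_zero, ← Int.cast_inj (α := ℚ), Int.cast_sub, ← hm, ← hxs]
        linarith
      | succ i =>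
        rw [Fin.cons_succ, ← Int.cast_inj (α := ℚ), hc', hm]
end

section
/- For n = 4 and each fixed index i ∈ {1,2,3,4}, the four vectors v^{i,j} = (e^i + e^j)/2 for the three indices j ≠ i, together with the vector (1/2)(e^1 + e^2 + e^3 + e^4), form a ℤ-basis of the lattice N = {x ∈ ℚ^4 : 2x ∈ ℤ^4 and x_1 + x_2 + x_3 + x_4 ∈ ℤ}. -/
/-!
Writing `x = ∑ a_j c_j` in coordinates gives `x_j = (a_j + a_i) / 2` for `j ≠ i` and
`x_i = (∑ a_j) / 2`. Over `ℚ` this linear system is invertible, with solution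
`a_i = ∑ x_s - 2 x_i` and `a_j = 2 x_j + 2 x_i - ∑ x_s` for `j ≠ i`
(`eq_sum_iff_coeff`). The coefficients are integers as soon as `2x` and `∑ x_s` are integral,
which gives existence, and they are determined by `x`, which gives uniqueness.
-/

/-- The explicit inversion of the change of coordinates given by the family `c`. -/
theorem eq_sum_iff_coeff (i : Fin 4) (c : Fin 4 → Fin 4 → ℚ)
    (hc : ∀ j : Fin 4, c j = if j = i then (fun _ => (1 / 2 : ℚ))
        else (1 / 2 : ℚ) • (Pi.single i (1 : ℚ) + Pi.single j 1))
    (x : Fin 4 → ℚ) (a : Fin 4 → ℤ) :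
    x = ∑ j : Fin 4, a j • c j ↔
      ∀ j, (a j : ℚ) = if j = i then ∑ s, x s - 2 * x i else 2 * x j + 2 * x i - ∑ s, x s := by
  have hc' : ∀ j s, c j s = if j = i then (1 / 2 : ℚ)
      else 1 / 2 * ((if s = i then 1 else 0) + if s = j then 1 else 0) := by
    intro j s
    rw [hc j]
    split_ifs <;> simp_all
  rw [funext_iff]
  simp only [Finset.sum_apply, Pi.mul_apply, Pi.intCast_apply, zsmul_eq_mul, hc',
    Fin.sum_univ_four, Fin.forall_fin_succ]
  fin_cases i <;> simp <;> constructor <;> rintro ⟨h0, h1, h2, h3⟩ <;>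
    refine ⟨?_, ?_, ?_, ?_⟩ <;> linarith

/-- For `n = 4` and each fixed `i`, the three vectors `v^{i,j} = (e^i+e^j)/2` (`j ≠ i`)
together with `(1/2)(e^1+e^2+e^3+e^4)` form a ℤ-basis of the lattice
`N = {x ∈ ℚ^4 : 2x ∈ ℤ^4, ∑ x_i ∈ ℤ}`: each of them lies in `N`, and every element of
`N` is a unique ℤ-linear combination of them. -/
theorem A14_lattice_basis (i : Fin 4)
    (c : Fin 4 → Fin 4 → ℚ)
    (hc : ∀ j : Fin 4, c j = if j = i then (fun _ => (1 / 2 : ℚ))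
        else (1 / 2 : ℚ) • (Pi.single i (1 : ℚ) + Pi.single j 1)) :
    (∀ j : Fin 4, c j ∈
        {y : Fin 4 → ℚ | (∀ s, ∃ m : ℤ, 2 * y s = (m : ℚ)) ∧ ∃ m : ℤ, ∑ s, y s = (m : ℚ)})
    ∧ ∀ x ∈ {y : Fin 4 → ℚ | (∀ s, ∃ m : ℤ, 2 * y s = (m : ℚ)) ∧ ∃ m : ℤ, ∑ s, y s = (m : ℚ)},
        ∃! a : Fin 4 → ℤ, x = ∑ j : Fin 4, a j • c j := by
  refine ⟨fun j => ⟨fun s => ?_, ?_⟩, ?_⟩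
  · rw [hc j]
    split_ifs with h
    · exact ⟨1, by norm_num⟩
    · refine ⟨(if s = i then 1 else 0) + (if s = j then 1 else 0), ?_⟩
      simp [Pi.single_apply]
  · rw [hc j]
    split_ifs with h
    · exact ⟨2, by norm_num⟩
    · refine ⟨1, ?_⟩
      simp only [Pi.smul_apply, Pi.add_apply, smul_eq_mul, ← Finset.mul_sum,
        Finset.sum_add_distrib, Finset.sum_pi_single', Finset.mem_univ, if_true]
      norm_num
  · rintro x ⟨hx, M, hM⟩
    choose m hm using hx
    simp only [eq_sum_iff_coeff i c hc]
    refine ⟨fun j => if j = i then M - m i else m j + m i - M, fun j => ?_, fun b hb => ?_⟩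
    · rw [hM, hm, hm]
      push_cast
      rfl
    · funext j
      have h := hb j
      rw [hM, hm, hm] at h
      split_ifs at h ⊢ <;> exact_mod_cast h
end

section
/- There are exactly twelve finite subsets W ⊆ ℕ^4 with the following two properties: (i) W is downward closed, i.e. if K ∈ W and K' ∈ ℕ^4 satisfies K'_s ≤ K_s for all s, then K' ∈ W; (ii) the map sending K ∈ W to the class of K mod 2 in the quotient group (ℤ/2)^4/⟨(1,1,1,1)⟩ is a bijection from W onto this 8-element group. (These W are the exponent sets of monomial bases of ℂ[Z]/J_0 for the twelve A_1(4)-invariant monomial ideals J_0 in Hilb^{A_1(4)}(ℂ^4).) -/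
/-!
A downward closed set `W` on which reduction is injective contains no vector with an entry `≥ 2`:
otherwise it would contain both `0` and some `2 e_s`, which have the same class. So `W ⊆ {0,1}^4`,
and the bijection condition says that `W` picks exactly one vector out of each of the eight pairs
`{v, 1 - v}`. Such a `W` is the same thing as a function `c` from the eight pairs to `Bool`
(`sectionSet c`), and downward closure becomes the decidable condition `IsLower c` on `c`. Among
the `2 ^ 8` choices exactly twelve satisfy it: the four sets of all subsets of a
three-element set, and the eight graphs on four vertices (with all singletons and the empty set)
that contain one edge from each of the three perfect matchings.
-/

/-- The reduction map sending an exponent vector `K ∈ ℕ^4` to its class in the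
8-element group `(ℤ/2)^4 / ⟨(1,1,1,1)⟩`. -/
noncomputable def qmapTwo (K : Fin 4 → ℕ) :
    (Fin 4 → ZMod 2) ⧸ Submodule.span (ZMod 2) ({fun _ => 1} : Set (Fin 4 → ZMod 2)) :=
  Submodule.Quotient.mk (fun s => (K s : ZMod 2))

namespace A14

/-- The 0/1 vector of the pair `{v, 1 - v}` indexed by `x` whose zeroth entry is `b`. The index `x`
records which of the other three entries differ from the zeroth one. -/
def bits (b : Bool) (x : Fin 3 → Bool) : Fin 4 → Bool :=
  Fin.cons b (fun i => xor (x i) b)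

/-- `bits b x` as an exponent vector in `ℕ^4`. -/
def vec (b : Bool) (x : Fin 3 → Bool) : Fin 4 → ℕ := fun s => (bits b x s).toNat

/-- The set containing, for each complementary pair `x`, the vector selected by `c x`. -/
def sectionSet (c : (Fin 3 → Bool) → Bool) : Finset (Fin 4 → ℕ) :=
  Finset.univ.image fun x => vec (c x) x

/-- Downward closure of `sectionSet c`, expressed inside the cube `{0,1}^4`. -/
def IsLower (c : (Fin 3 → Bool) → Bool) : Prop :=
  ∀ x y b, (∀ s, bits b y s ≤ bits (c x) x s) → c y = b

instance : DecidablePred IsLower := fun c => by unfold IsLower; infer_instance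

/-- A finite check over the `2 ^ 8` choice functions. -/
lemma card_isLower : Fintype.card {c // IsLower c} = 12 := by
  decide +kernel

lemma vec_inj {b b' : Bool} {x y : Fin 3 → Bool} (h : vec b x = vec b' y) : b = b' ∧ x = y := by
  have h0 : ∀ s, bits b x s = bits b' y s := fun s => by
    have := congrFun h s
    simp only [vec] at this
    revert this
    generalize bits b x s = p
    generalize bits b' y s = q
    revert p q
    decide
  have hb : b = b' := h0 0
  subst hb
  refine ⟨rfl, funext fun i => ?_⟩
  have := h0 i.succ
  simpa [bits] using this

lemma exists_vec {K : Fin 4 → ℕ} (h : ∀ s, K s ≤ 1) : ∃ b x, K = vec b x := by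
  refine ⟨decide (K 0 = 1), fun i => xor (decide (K i.succ = 1)) (decide (K 0 = 1)), ?_⟩
  have key : ∀ n : ℕ, n ≤ 1 → n = (decide (n = 1)).toNat := by
    intro n hn
    interval_cases n <;> rfl
  funext s
  refine Fin.cases ?_ (fun i => ?_) s
  · simpa [vec, bits] using key _ (h 0)
  · simpa [vec, bits] using key _ (h i.succ)

lemma mk_eq_iff (u v : Fin 4 → ZMod 2) :
    (Submodule.Quotient.mk u : (Fin 4 → ZMod 2) ⧸
      Submodule.span (ZMod 2) ({fun _ => 1} : Set (Fin 4 → ZMod 2))) = Submodule.Quotient.mk v ↔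
      ∃ a : ZMod 2, ∀ s, u s = v s + a := by
  rw [Submodule.Quotient.eq, Submodule.mem_span_singleton]
  refine exists_congr fun a => ?_
  rw [funext_iff]
  refine forall_congr' fun s => ?_
  simp only [Pi.smul_apply, Pi.sub_apply, smul_eq_mul, mul_one]
  rw [eq_sub_iff_add_eq, add_comm, eq_comm]

lemma qmapTwo_vec_inj {b b' : Bool} {x y : Fin 3 → Bool}
    (h : qmapTwo (vec b x) = qmapTwo (vec b' y)) : x = y := by
  obtain ⟨a, ha⟩ := (mk_eq_iff _ _).1 h
  funext i
  have h0 := ha 0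
  have hi := ha i.succ
  simp only [vec, bits, Fin.cons_zero, Fin.cons_succ] at h0 hi
  clear ha h
  revert h0 hi
  generalize x i = p
  generalize y i = q
  revert p q b b' a
  decide

/-- Both members of the pair `x` have the same class, and every class arises from a pair. -/
lemma exists_qmapTwo_vec (q : (Fin 4 → ZMod 2) ⧸
    Submodule.span (ZMod 2) ({fun _ => 1} : Set (Fin 4 → ZMod 2))) :
    ∃ x, ∀ b, qmapTwo (vec b x) = q := by
  obtain ⟨v, rfl⟩ := Submodule.Quotient.mk_surjective _ q
  refine ⟨fun i => decide (v i.succ ≠ v 0), fun b => (mk_eq_iff _ _).2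
    ⟨(b.toNat : ZMod 2) + v 0, fun s => ?_⟩⟩
  refine Fin.cases ?_ (fun i => ?_) s
  · simp only [vec, bits, Fin.cons_zero]
    generalize v 0 = p
    revert p b
    decide
  · simp only [vec, bits, Fin.cons_succ]
    generalize v 0 = p
    generalize v i.succ = r
    revert p r b
    decide

lemma qmapTwo_vec (b b' : Bool) (x : Fin 3 → Bool) :
    qmapTwo (vec b x) = qmapTwo (vec b' x) := by
  obtain ⟨y, hy⟩ := exists_qmapTwo_vec (qmapTwo (vec b x))
  have : y = x := qmapTwo_vec_inj (hy b)
  subst this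
  exact (hy b').symm

lemma vec_mem_sectionSet {c : (Fin 3 → Bool) → Bool} {b : Bool} {x : Fin 3 → Bool} :
    vec b x ∈ sectionSet c ↔ c x = b := by
  simp only [sectionSet, Finset.mem_image, Finset.mem_univ, true_and]
  constructor
  · rintro ⟨y, hy⟩
    obtain ⟨h1, rfl⟩ := vec_inj hy
    exact h1
  · rintro rfl
    exact ⟨x, rfl⟩

lemma vec_le_iff {b b' : Bool} {x y : Fin 3 → Bool} :
    (∀ s, vec b x s ≤ vec b' y s) ↔ ∀ s, bits b x s ≤ bits b' y s := by
  refine forall_congr' fun s => ?_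
  simp only [vec]
  generalize bits b x s = p
  generalize bits b' y s = q
  revert p q
  decide

lemma vec_le_one (b : Bool) (x : Fin 3 → Bool) (s : Fin 4) : vec b x s ≤ 1 :=
  Bool.toNat_le _

/-- `W` is downward closed and a set of representatives for the 8-element quotient group. -/
def Good (W : Finset (Fin 4 → ℕ)) : Prop :=
  (∀ K ∈ W, ∀ K' : Fin 4 → ℕ, (∀ s, K' s ≤ K s) → K' ∈ W)
      ∧ Set.BijOn qmapTwo ↑W Set.univ

lemma good_sectionSet {c : (Fin 3 → Bool) → Bool} (hc : IsLower c) : Good (sectionSet c) := by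
  refine ⟨fun K hK K' hle => ?_, fun _ _ => Set.mem_univ _, ?_, fun q _ => ?_⟩
  · obtain ⟨x, -, rfl⟩ := Finset.mem_image.1 hK
    obtain ⟨b, y, rfl⟩ := exists_vec fun s => (hle s).trans (vec_le_one _ _ s)
    exact vec_mem_sectionSet.2 (hc x y b (vec_le_iff.1 hle))
  · intro K hK K' hK' h
    obtain ⟨x, -, rfl⟩ := Finset.mem_image.1 (Finset.mem_coe.1 hK)
    obtain ⟨y, -, rfl⟩ := Finset.mem_image.1 (Finset.mem_coe.1 hK')
    obtain rfl := qmapTwo_vec_inj h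
    rfl
  · obtain ⟨x, hx⟩ := exists_qmapTwo_vec q
    exact ⟨vec (c x) x, vec_mem_sectionSet.2 rfl, hx _⟩

/-- A large entry at `s` would put both `0` and `2 e_s`, which have the same class, into `W`. -/
lemma Good.le_one {W : Finset (Fin 4 → ℕ)} (hW : Good W) {K : Fin 4 → ℕ} (hK : K ∈ W)
    (s : Fin 4) : K s ≤ 1 := by
  by_contra! h
  have h0 : (0 : Fin 4 → ℕ) ∈ W := hW.1 K hK _ fun t => Nat.zero_le _
  have h2 : (Pi.single s 2 : Fin 4 → ℕ) ∈ W := hW.1 K hK _ fun t => by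
    by_cases hts : t = s
    · subst hts
      rw [Pi.single_eq_same]
      exact h
    · simp [hts]
  have he : qmapTwo (Pi.single s 2) = qmapTwo 0 := by
    refine (mk_eq_iff _ _).2 ⟨0, fun t => ?_⟩
    by_cases hts : t = s
    · subst hts
      simp only [Pi.single_eq_same, Pi.zero_apply]
      decide
    · simp [hts]
  have := congrFun (hW.2.injOn h2 h0 he) s
  simp at this

lemma Good.exists_section {W : Finset (Fin 4 → ℕ)} (hW : Good W) :
    ∃ c, IsLower c ∧ sectionSet c = W := by
  have hex : ∀ x, ∃ b, vec b x ∈ W := fun x => by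
    obtain ⟨K, hK, hq⟩ := hW.2.surjOn (Set.mem_univ (qmapTwo (vec false x)))
    obtain ⟨b, y, rfl⟩ := exists_vec (hW.le_one hK)
    obtain rfl := qmapTwo_vec_inj hq
    exact ⟨b, hK⟩
  choose c hc using hex
  have hu : ∀ {b x}, vec b x ∈ W → c x = b := fun {b x} h =>
    (vec_inj (hW.2.injOn (hc x) h (qmapTwo_vec _ _ x))).1
  refine ⟨c, fun x y b hle => hu (hW.1 _ (hc x) _ (vec_le_iff.2 hle)), ?_⟩
  ext K
  constructor
  · intro hK
    obtain ⟨x, -, rfl⟩ := Finset.mem_image.1 hK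
    exact hc x
  · intro hK
    obtain ⟨b, y, rfl⟩ := exists_vec (hW.le_one hK)
    exact vec_mem_sectionSet.2 (hu hK)

end A14

/-- There are exactly twelve finite subsets `W ⊆ ℕ^4` that are downward closed and map
bijectively onto the 8-element group `(ℤ/2)^4/⟨(1,1,1,1)⟩` under reduction mod 2.
These are the exponent sets of monomial bases of `ℂ[Z]/J₀` for the twelve
`A_1(4)`-invariant monomial ideals `J₀` in `Hilb^{A_1(4)}(ℂ^4)`. -/
theorem A14_twelve_monomial_ideals :
    Nat.card {W : Finset (Fin 4 → ℕ) //
      (∀ K ∈ W, ∀ K' : Fin 4 → ℕ, (∀ s, K' s ≤ K s) → K' ∈ W)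
      ∧ Set.BijOn qmapTwo ↑W Set.univ} = 12 := by
  rw [← A14.card_isLower, ← Nat.card_eq_fintype_card]
  symm
  refine Nat.card_eq_of_bijective
    (fun c => ⟨A14.sectionSet c.1, A14.good_sectionSet c.2⟩) ⟨fun c d h => ?_, fun W => ?_⟩
  · refine Subtype.ext (funext fun x => ?_)
    have h' : A14.sectionSet c.1 = A14.sectionSet d.1 := congrArg Subtype.val h
    exact (A14.vec_mem_sectionSet.1 (h' ▸ A14.vec_mem_sectionSet.2 rfl)).symm
  · obtain ⟨c, hc, h⟩ := A14.Good.exists_section W.2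
    exact ⟨⟨c, hc⟩, Subtype.ext h⟩
end

section
/- Let J be an ideal of ℂ[Z_1, Z_2, Z_3, Z_4] and let γ_1, γ_2, γ_3, γ_4, γ_{12}, γ_{13}, γ_{14}, γ_{234} be complex numbers such that J contains the eight polynomials Z_1Z_4 − γ_{14}Z_2Z_3, Z_1Z_3 − γ_{13}Z_2Z_4, Z_1Z_2 − γ_{12}Z_3Z_4, Z_2Z_3Z_4 − γ_{234}Z_1, Z_1² − γ_1, Z_2² − γ_2, Z_3² − γ_3, Z_4² − γ_4. Assume the images of the eight monomials 1, Z_1, Z_2, Z_3, Z_4, Z_2Z_3, Z_2Z_4, Z_3Z_4 in ℂ[Z_1,Z_2,Z_3,Z_4]/J are linearly independent over ℂ. Then γ_1 = γ_{12}γ_{13}γ_4, γ_2 = γ_{234}γ_{12}, γ_3 = γ_{234}γ_{13}, and γ_4 = γ_{234}γ_{14}. -/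
/-! In the quotient by `J`, each relation comes from reducing one monomial in two ways:
`Z_1 Z_2²`, `Z_1 Z_3²` and `Z_1 Z_4²` are scalar multiples of `Z_1` both by the square relations
and by way of `Z_2 Z_3 Z_4`, while `Z_1² Z_2` is a multiple of `Z_2` both directly and along
`Z_1² Z_2 → Z_1 Z_3 Z_4 → Z_2 Z_4² → Z_2`. Since the images of `Z_1` and `Z_2` are nonzero,
the two scalars agree in each case. -/

open MvPolynomial

theorem eq_of_C_mul_sub_mem {J : Ideal (MvPolynomial (Fin 4) ℂ)} {p : MvPolynomial (Fin 4) ℂ}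
    (hp : Ideal.Quotient.mk J p ≠ 0) {a b : ℂ} (h : C a * p - C b * p ∈ J) : a = b := by
  by_contra hab
  apply hp
  rw [Ideal.Quotient.eq_zero_iff_mem]
  have h' := J.mul_mem_left (C (a - b)⁻¹) h
  rwa [← sub_mul, ← C_sub, ← mul_assoc, ← C_mul, inv_mul_cancel₀ (sub_ne_zero.mpr hab), C_1,
    one_mul] at h'

/-- Local coordinate computation for the chart of `Hilb^{A_1(4)}(ℂ^4)` centered at the
monomial ideal `I(x_{C_1})`.  Variables: `Z_1 = X 0`, `Z_2 = X 1`, `Z_3 = X 2`,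
`Z_4 = X 3`. -/
theorem A14_chart_C1 (J : Ideal (MvPolynomial (Fin 4) ℂ))
    (γ1 γ2 γ3 γ4 γ12 γ13 γ14 γ234 : ℂ)
    (h14 : X 0 * X 3 - C γ14 * (X 1 * X 2) ∈ J)
    (h13 : X 0 * X 2 - C γ13 * (X 1 * X 3) ∈ J)
    (h12 : X 0 * X 1 - C γ12 * (X 2 * X 3) ∈ J)
    (h234 : X 1 * X 2 * X 3 - C γ234 * X 0 ∈ J)
    (h1 : X 0 ^ 2 - C γ1 ∈ J)
    (h2 : X 1 ^ 2 - C γ2 ∈ J)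
    (h3 : X 2 ^ 2 - C γ3 ∈ J)
    (h4 : X 3 ^ 2 - C γ4 ∈ J)
    (hli : LinearIndependent ℂ (fun i : Fin 8 => Ideal.Quotient.mk J
      (![1, X 0, X 1, X 2, X 3, X 1 * X 2, X 1 * X 3, X 2 * X 3] i))) :
    γ1 = γ12 * γ13 * γ4 ∧ γ2 = γ234 * γ12 ∧ γ3 = γ234 * γ13 ∧ γ4 = γ234 * γ14 := by
  have hZ1 : Ideal.Quotient.mk J (X 0) ≠ 0 := hli.ne_zero 1
  have hZ2 : Ideal.Quotient.mk J (X 1) ≠ 0 := hli.ne_zero 2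
  refine ⟨eq_of_C_mul_sub_mem hZ2 ?_, eq_of_C_mul_sub_mem hZ1 ?_, eq_of_C_mul_sub_mem hZ1 ?_,
    eq_of_C_mul_sub_mem hZ1 ?_⟩
  · convert J.add_mem (J.sub_mem (J.mul_mem_left (X 0) h12) (J.mul_mem_left (X 1) h1))
      (J.add_mem (J.mul_mem_left (C γ12 * X 3) h13)
        (J.mul_mem_left (C γ12 * C γ13 * X 1) h4)) using 1
    simp only [C_mul]
    ring
  · convert J.add_mem (J.sub_mem (J.mul_mem_left (X 1) h12) (J.mul_mem_left (X 0) h2))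
      (J.mul_mem_left (C γ12) h234) using 1
    simp only [C_mul]
    ring
  · convert J.add_mem (J.sub_mem (J.mul_mem_left (X 2) h13) (J.mul_mem_left (X 0) h3))
      (J.mul_mem_left (C γ13) h234) using 1
    simp only [C_mul]
    ring
  · convert J.add_mem (J.sub_mem (J.mul_mem_left (X 3) h14) (J.mul_mem_left (X 0) h4))
      (J.mul_mem_left (C γ14) h234) using 1
    simp only [C_mul]
    ring
end

section
/- Let J be an ideal of ℂ[Z_1, Z_2, Z_3, Z_4] and let γ'_1, γ'_2, γ'_3, γ'_4, γ'_{13}, γ'_{14}, γ'_{34} be complex numbers such that J contains the seven polynomials Z_1Z_3 − γ'_{13}Z_2Z_4, Z_1Z_4 − γ'_{14}Z_2Z_3, Z_3Z_4 − γ'_{34}Z_1Z_2, Z_1² − γ'_1, Z_2² − γ'_2, Z_3² − γ'_3, Z_4² − γ'_4. Assume the images of the eight monomials 1, Z_1, Z_2, Z_3, Z_4, Z_1Z_2, Z_2Z_3, Z_2Z_4 in ℂ[Z_1,Z_2,Z_3,Z_4]/J are linearly independent over ℂ. Then γ'_1 = γ'_2γ'_{13}γ'_{14}, γ'_3 = γ'_2γ'_{13}γ'_{34},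 and γ'_4 = γ'_2γ'_{14}γ'_{34}. -/
open MvPolynomial

/-!
Compute in the quotient by `J`, writing `z₁, …, z₄` for the classes of the variables. Reducing a
degree-three monomial in two ways gives

* `γ1 z₃ = z₁ (z₁ z₃) = γ13 z₂ (z₁ z₄) = γ13 γ14 z₂² z₃ = γ2 γ13 γ14 z₃`,
* `γ3 z₁ = z₃ (z₁ z₃) = γ13 z₂ (z₃ z₄) = γ13 γ34 z₂² z₁ = γ2 γ13 γ34 z₁`,
* `γ4 z₁ = z₄ (z₁ z₄) = γ14 z₂ (z₃ z₄) = γ14 γ34 z₂² z₁ = γ2 γ14 γ34 z₁`.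

By linear independence `z₁` and `z₃` are nonzero, so the coefficients agree.
-/

/-- A nonzero constant is a unit, so a scalar relation `a p = b p` modulo `J` with `p ∉ J`
forces `a = b`. -/
lemma eq_of_C_sub_mul_mem {J : Ideal (MvPolynomial (Fin 4) ℂ)} {p : MvPolynomial (Fin 4) ℂ}
    (hp : p ∉ J) {a b : ℂ} (h : (C a - C b) * p ∈ J) : a = b := by
  by_contra hab
  refine hp ?_
  have hinv : (C (a - b)⁻¹ : MvPolynomial (Fin 4) ℂ) * (C a - C b) = 1 := by
    rw [← C_sub, ← C_mul, inv_mul_cancel₀ (sub_ne_zero.mpr hab), C_1]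
  have := J.mul_mem_left (C (a - b)⁻¹) h
  rwa [← mul_assoc, hinv, one_mul] at this

/-- Local coordinate computation for the chart of `Hilb^{A_1(4)}(ℂ^4)` centered at the
monomial ideal `I(x_{C_2'})`.  Variables: `Z_1 = X 0`, `Z_2 = X 1`, `Z_3 = X 2`,
`Z_4 = X 3`. -/
theorem A14_chart_C2' (J : Ideal (MvPolynomial (Fin 4) ℂ))
    (γ1 γ2 γ3 γ4 γ13 γ14 γ34 : ℂ)
    (h13 : X 0 * X 2 - C γ13 * (X 1 * X 3) ∈ J)
    (h14 : X 0 * X 3 - C γ14 * (X 1 * X 2) ∈ J)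
    (h34 : X 2 * X 3 - C γ34 * (X 0 * X 1) ∈ J)
    (h1 : X 0 ^ 2 - C γ1 ∈ J)
    (h2 : X 1 ^ 2 - C γ2 ∈ J)
    (h3 : X 2 ^ 2 - C γ3 ∈ J)
    (h4 : X 3 ^ 2 - C γ4 ∈ J)
    (hli : LinearIndependent ℂ (fun i : Fin 8 => Ideal.Quotient.mk J
      (![1, X 0, X 1, X 2, X 3, X 0 * X 1, X 1 * X 2, X 1 * X 3] i))) :
    γ1 = γ2 * γ13 * γ14 ∧ γ3 = γ2 * γ13 * γ34 ∧ γ4 = γ2 * γ14 * γ34 := by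
  have hX0 : (X 0 : MvPolynomial (Fin 4) ℂ) ∉ J := fun h =>
    hli.ne_zero 1 (Ideal.Quotient.eq_zero_iff_mem.mpr h)
  have hX2 : (X 2 : MvPolynomial (Fin 4) ℂ) ∉ J := fun h =>
    hli.ne_zero 3 (Ideal.Quotient.eq_zero_iff_mem.mpr h)
  -- In each part the relation is an explicit combination of the generators.
  refine ⟨eq_of_C_sub_mul_mem hX2 ?_, eq_of_C_sub_mul_mem hX0 ?_, eq_of_C_sub_mul_mem hX0 ?_⟩
  · convert J.add_mem
      (J.sub_mem (J.mul_mem_left (X 0) h13) (J.mul_mem_left (X 2) h1))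
      (J.add_mem (J.mul_mem_left (C γ13 * X 1) h14)
        (J.mul_mem_left (C γ13 * C γ14 * X 2) h2)) using 1
    simp only [C_mul]
    ring
  · convert J.add_mem
      (J.sub_mem (J.mul_mem_left (X 2) h13) (J.mul_mem_left (X 0) h3))
      (J.add_mem (J.mul_mem_left (C γ13 * X 1) h34)
        (J.mul_mem_left (C γ13 * C γ34 * X 0) h2)) using 1
    simp only [C_mul]
    ring
  · convert J.add_mem
      (J.sub_mem (J.mul_mem_left (X 3) h14) (J.mul_mem_left (X 0) h4))
      (J.add_mem (J.mul_mem_left (C γ14 * X 1) h34)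
        (J.mul_mem_left (C γ14 * C γ34 * X 0) h2)) using 1
    simp only [C_mul]
    ring
end

section
/- Let J be an ideal of ℂ[Z_1, Z_2, Z_3, Z_4] and let v_1, v_2, v_3, v_4, u_1, u_2, u_3, u_4 be complex numbers such that J contains Z_1 − v_1Z_2Z_3Z_4, Z_2² − v_2, Z_3² − v_3, Z_4² − v_4, and also contains Z_2Z_3Z_4 − u_1Z_1, Z_1Z_2 − u_2Z_3Z_4, Z_1Z_3 − u_3Z_2Z_4, Z_1Z_4 − u_4Z_2Z_3. If Z_2Z_3Z_4 ∉ J, then u_1·v_1 = 1 and u_j = v_1·v_j for j = 2, 3, 4. -/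
/-!
Write `M` for the monomial `X 1 * X 2 * X 3`. Since `M ∉ J`, a scalar `c` with `C c * M ∈ J` must
vanish. Each claimed identity says that some scalar is zero. Modulo `J`, `M ≡ u1 X 0 ≡ u1 v1 M`
gives the first one. For the others,
`u2 (X 2 * X 3) ≡ X 0 * X 1 ≡ v1 (X 1 ^ 2 * X 2 * X 3) ≡ v1 v2 (X 2 * X 3)`, and multiplying by
`X 1` turns this into a scalar multiple of `M`; the indices 3 and 4 are symmetric.
-/

open MvPolynomial

/-- Transition computation between the charts of `Hilb^{A_1(4)}(ℂ^4)` centered at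
`I(x_{Δ_1})` and at `I(x_{C_1})`.  Variables: `Z_1 = X 0`, `Z_2 = X 1`, `Z_3 = X 2`,
`Z_4 = X 3`. -/
theorem A14_chart_transition (J : Ideal (MvPolynomial (Fin 4) ℂ))
    (v1 v2 v3 v4 u1 u2 u3 u4 : ℂ)
    (hv1 : X 0 - C v1 * (X 1 * X 2 * X 3) ∈ J)
    (hv2 : X 1 ^ 2 - C v2 ∈ J)
    (hv3 : X 2 ^ 2 - C v3 ∈ J)
    (hv4 : X 3 ^ 2 - C v4 ∈ J)
    (hu1 : X 1 * X 2 * X 3 - C u1 * X 0 ∈ J)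
    (hu2 : X 0 * X 1 - C u2 * (X 2 * X 3) ∈ J)
    (hu3 : X 0 * X 2 - C u3 * (X 1 * X 3) ∈ J)
    (hu4 : X 0 * X 3 - C u4 * (X 1 * X 2) ∈ J)
    (hnm : X 1 * X 2 * X 3 ∉ J) :
    u1 * v1 = 1 ∧ u2 = v1 * v2 ∧ u3 = v1 * v3 ∧ u4 = v1 * v4 := by
  have key : ∀ c : ℂ, C c * (X 1 * X 2 * X 3) ∈ J → c = 0 := by
    intro c hc
    by_contra h
    apply hnm
    have h2 := J.mul_mem_left (C c⁻¹) hc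
    rwa [← mul_assoc, ← C_mul, inv_mul_cancel₀ h, C_1, one_mul] at h2
  refine ⟨?_, ?_, ?_, ?_⟩
  · refine (sub_eq_zero.mp (key (1 - u1 * v1) ?_)).symm
    convert J.add_mem hu1 (J.mul_mem_left (C u1) hv1) using 1
    simp only [C_sub, C_mul, C_1]
    ring
  · refine (sub_eq_zero.mp (key (v1 * v2 - u2) ?_)).symm
    convert J.mul_mem_left (X 1) (J.sub_mem (J.sub_mem hu2 (J.mul_mem_left (X 1) hv1))
      (J.mul_mem_left (C v1 * (X 2 * X 3)) hv2)) using 1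
    simp only [C_sub, C_mul]
    ring
  · refine (sub_eq_zero.mp (key (v1 * v3 - u3) ?_)).symm
    convert J.mul_mem_left (X 2) (J.sub_mem (J.sub_mem hu3 (J.mul_mem_left (X 2) hv1))
      (J.mul_mem_left (C v1 * (X 1 * X 3)) hv3)) using 1
    simp only [C_sub, C_mul]
    ring
  · refine (sub_eq_zero.mp (key (v1 * v4 - u4) ?_)).symm
    convert J.mul_mem_left (X 3) (J.sub_mem (J.sub_mem hu4 (J.mul_mem_left (X 3) hv1))
      (J.mul_mem_left (C v1 * (X 1 * X 2)) hv4)) using 1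
    simp only [C_sub, C_mul]
    ring
end

section
/- Let r ≥ 1 and let W ⊆ ℕ^4 be an A_r(4)-regular staircase. Then for every partition {i, j, k, s} = {1, 2, 3, 4}: 1 ≤ l_{{i,j,k}} ≤ l_{{i,j}} ≤ l_{{i}} ≤ r+1, l_{{i}} + l_{{j,k,s}} = r + 2, and l_{{i,j}} + l_{{k,s}} = r + 2. -/
/-!
Write `n = r + 1`. Since `0`, `n·e_t` and `(1,1,1,1)` have the same class and `0 ∈ W`, every vector
of `W` has all entries below `n` and at least one entry equal to `0`. The vectors `m·𝟙_S` and
`(n - m)·𝟙_{Sᶜ}` lie in the same class for every `m ≤ n`, so they cannot both be in `W` unless they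
coincide; this gives `l S + l Sᶜ ≤ n + 1` (`IsArRegularStaircase.add_le`). Conversely, the
representative in `W` of the class of `m·𝟙_S` is constant on `S` and on `Sᶜ` (its entries are
residues in `[0, n)`) and vanishes somewhere, so it is `m·𝟙_S` or `(n - m)·𝟙_{Sᶜ}`: one of these is
in `W`. This gives `l S + l Sᶜ ≥ n + 1` (`IsArRegularStaircase.le_add`). Monotonicity of `l` is
immediate from downward closure.
-/

/-- The reduction map sending an exponent vector `K ∈ ℕ^4` to its class in the group
`(ℤ/(r+1))^4 / ⟨(1,1,1,1)⟩` of order `(r+1)^3`. -/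
noncomputable def qmapAr (r : ℕ) (K : Fin 4 → ℕ) :
    (Fin 4 → ZMod (r + 1)) ⧸
      Submodule.span (ZMod (r + 1)) ({fun _ => 1} : Set (Fin 4 → ZMod (r + 1))) :=
  Submodule.Quotient.mk (fun s => (K s : ZMod (r + 1)))

/-- `W ⊆ ℕ^4` is an `A_r(4)`-regular staircase: downward closed, and mapping bijectively
onto `(ℤ/(r+1))^4/⟨(1,1,1,1)⟩` under reduction mod `r+1`. -/
def IsArRegularStaircase (r : ℕ) (W : Finset (Fin 4 → ℕ)) : Prop :=
  (∀ K ∈ W, ∀ K' : Fin 4 → ℕ, (∀ s, K' s ≤ K s) → K' ∈ W)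
  ∧ Set.BijOn (qmapAr r) ↑W Set.univ

/-- Two exponent vectors have the same class iff they differ by a constant vector modulo `r+1`. -/
lemma qmapAr_eq_iff (r : ℕ) (K K' : Fin 4 → ℕ) :
    qmapAr r K = qmapAr r K' ↔ ∃ c : ZMod (r + 1), ∀ t, (K t : ZMod (r + 1)) = K' t + c := by
  unfold qmapAr
  rw [Submodule.Quotient.eq, Submodule.mem_span_singleton]
  constructor
  · rintro ⟨c, hc⟩
    refine ⟨c, fun t => ?_⟩
    have := congrFun hc t
    simp only [Pi.smul_apply, smul_eq_mul, mul_one, Pi.sub_apply] at this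
    rw [this]; ring
  · rintro ⟨c, hc⟩
    refine ⟨c, funext fun t => ?_⟩
    simp [hc t]

/-- The exponent vector `m·𝟙_S`. -/
abbrev indVec (S : Finset (Fin 4)) (m : ℕ) : Fin 4 → ℕ := fun t => if t ∈ S then m else 0

namespace IsArRegularStaircase

variable {r : ℕ} {W : Finset (Fin 4 → ℕ)}

lemma zero_mem (hW : IsArRegularStaircase r W) : (fun _ => 0) ∈ W := by
  obtain ⟨K, hK, -⟩ := hW.2.surjOn (Set.mem_univ (qmapAr r (fun _ => 0)))
  exact hW.1 K hK _ fun _ => Nat.zero_le _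

lemma eq_of_class (hW : IsArRegularStaircase r W) {K K' : Fin 4 → ℕ} (hK : K ∈ W) (hK' : K' ∈ W)
    (c : ZMod (r + 1)) (h : ∀ t, (K t : ZMod (r + 1)) = K' t + c) : K = K' :=
  hW.2.injOn hK hK' ((qmapAr_eq_iff r K K').2 ⟨c, h⟩)

lemma indVec_top_notMem (hW : IsArRegularStaircase r W) {S : Finset (Fin 4)} (hS : S.Nonempty) :
    indVec S (r + 1) ∉ W := by
  intro h
  obtain ⟨t, ht⟩ := hS
  have hn : ((r + 1 : ℕ) : ZMod (r + 1)) = 0 := ZMod.natCast_self _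
  have := congrFun (hW.eq_of_class h hW.zero_mem 0 fun u => by
    by_cases hu : u ∈ S <;> simp only [indVec, hu, if_true, if_false, hn] <;> simp) t
  simp [indVec, ht] at this

lemma lt_of_mem (hW : IsArRegularStaircase r W) {K : Fin 4 → ℕ} (hK : K ∈ W) (t : Fin 4) :
    K t < r + 1 := by
  by_contra! h
  refine hW.indVec_top_notMem (Finset.singleton_nonempty t) (hW.1 K hK _ fun u => ?_)
  by_cases hu : u = t
  · subst hu; simpa [indVec] using h
  · simp [indVec, hu]

lemma exists_eq_zero (hW : IsArRegularStaircase r W) {K : Fin 4 → ℕ} (hK : K ∈ W) :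
    ∃ t, K t = 0 := by
  by_contra! h
  have h1 : (fun _ => 1) ∈ W := hW.1 K hK _ fun t => Nat.one_le_iff_ne_zero.2 (h t)
  have := congrFun (hW.eq_of_class h1 hW.zero_mem 1 fun u => by simp) 0
  simp at this

lemma indVec_mono (hW : IsArRegularStaircase r W) {S T : Finset (Fin 4)} (hST : S ⊆ T) {m m' : ℕ}
    (hm : m ≤ m') (h : indVec T m' ∈ W) : indVec S m ∈ W := by
  refine hW.1 _ h _ fun t => ?_
  by_cases ht : t ∈ S
  · simpa [indVec, ht, hST ht] using hm
  · simp [indVec, ht]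

variable {l : Finset (Fin 4) → ℕ}

lemma add_le (hW : IsArRegularStaircase r W)
    (hl : ∀ S : Finset (Fin 4), S.Nonempty → IsLeast {m : ℕ | 0 < m ∧ indVec S m ∉ W} (l S))
    {S : Finset (Fin 4)} (hS : S.Nonempty) (hSc : Sᶜ.Nonempty) : l S + l Sᶜ ≤ r + 2 := by
  have h0 := (hl S hS).1.1
  have hle := (hl S hS).2 ⟨Nat.succ_pos r, hW.indVec_top_notMem hS⟩
  -- `(l S - 1)·𝟙_S` is in `W`, so the equivalent `(r + 2 - l S)·𝟙_{Sᶜ}` is not.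
  have hmem : indVec S (l S - 1) ∈ W := by
    by_cases h1 : l S = 1
    · exact hW.1 _ hW.zero_mem _ fun t => by simp [indVec, h1]
    · by_contra hc
      have := (hl S hS).2 ⟨by omega, hc⟩
      omega
  suffices h : l Sᶜ ≤ r + 2 - l S by omega
  refine (hl Sᶜ hSc).2 ⟨by omega, fun hc => ?_⟩
  obtain ⟨t, ht⟩ := hSc
  have ht' : t ∉ S := by simpa using ht
  have hsum : (((l S - 1) + (r + 2 - l S) : ℕ) : ZMod (r + 1)) = 0 := by
    rw [show l S - 1 + (r + 2 - l S) = r + 1 by omega]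
    exact ZMod.natCast_self _
  rw [Nat.cast_add] at hsum
  have := congrFun (hW.eq_of_class hmem hc ((l S - 1 : ℕ) : ZMod (r + 1)) fun u => by
    by_cases hu : u ∈ S
    · simp [indVec, hu]
    · simp only [indVec, hu, if_false, Finset.mem_compl, not_false_eq_true, if_true, Nat.cast_zero]
      linear_combination -hsum) t
  simp only [indVec, ht', ht, if_true, if_false] at this
  omega

lemma le_add (hW : IsArRegularStaircase r W)
    (hl : ∀ S : Finset (Fin 4), S.Nonempty → IsLeast {m : ℕ | 0 < m ∧ indVec S m ∉ W} (l S))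
    {S : Finset (Fin 4)} (hS : S.Nonempty) (hSc : Sᶜ.Nonempty) : r + 2 ≤ l S + l Sᶜ := by
  by_contra! hlt
  obtain ⟨h0, hnot⟩ := (hl S hS).1
  obtain ⟨h0', hnot'⟩ := (hl Sᶜ hSc).1
  -- The class of `l S · 𝟙_S` has no representative in `W`.
  obtain ⟨K, hK, hKq⟩ := hW.2.surjOn (Set.mem_univ (qmapAr r (indVec S (l S))))
  obtain ⟨c, hc⟩ := (qmapAr_eq_iff _ _ _).1 hKq
  have hin : ∀ t ∈ S, (K t : ZMod (r + 1)) = l S + c := fun t ht => by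
    simpa [indVec, ht] using hc t
  have hout : ∀ t ∉ S, (K t : ZMod (r + 1)) = c := fun t ht => by
    simpa [indVec, ht] using hc t
  have key : ∀ (t : Fin 4) (m : ℕ), m < r + 1 → (K t : ZMod (r + 1)) = m → K t = m := by
    intro t m hm h
    have := (ZMod.natCast_eq_natCast_iff' _ _ _).1 h
    rwa [Nat.mod_eq_of_lt (hW.lt_of_mem hK t), Nat.mod_eq_of_lt hm] at this
  obtain ⟨z, hz⟩ := hW.exists_eq_zero hK
  by_cases hzS : z ∈ S
  · -- `K` vanishes on `S`, hence equals `(r + 1 - l S)·𝟙_{Sᶜ}`, above `l Sᶜ · 𝟙_{Sᶜ}`.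
    have h1 := hin z hzS
    rw [hz, Nat.cast_zero] at h1
    have hcv : c = ((r + 1 - l S : ℕ) : ZMod (r + 1)) := by
      rw [Nat.cast_sub (by omega), ZMod.natCast_self]
      linear_combination -h1
    refine hnot' (hW.1 K hK _ fun t => ?_)
    by_cases ht : t ∈ S
    · simp [indVec, ht]
    · have := key t (r + 1 - l S) (by omega) (by rw [hout t ht, hcv])
      simp only [indVec, Finset.mem_compl, ht, not_false_eq_true, if_true]
      omega
  · -- `K` vanishes off `S`, hence equals `l S · 𝟙_S`.
    have h1 := hout z hzS
    rw [hz, Nat.cast_zero] at h1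
    refine hnot (hW.1 K hK _ fun t => ?_)
    by_cases ht : t ∈ S
    · have := key t (l S) (by omega) (by rw [hin t ht, ← h1, add_zero])
      simp [indVec, ht, this]
    · simp [indVec, ht]

lemma anti (hW : IsArRegularStaircase r W)
    (hl : ∀ S : Finset (Fin 4), S.Nonempty → IsLeast {m : ℕ | 0 < m ∧ indVec S m ∉ W} (l S))
    {S T : Finset (Fin 4)} (hS : S.Nonempty) (hST : S ⊆ T) : l T ≤ l S :=
  (hl T (hS.mono hST)).2
    ⟨(hl S hS).1.1, fun h => (hl S hS).1.2 (hW.indVec_mono hST le_rfl h)⟩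

end IsArRegularStaircase

/-- For an `A_r(4)`-regular staircase `W` with staircase heights `l S` (the least
positive `m` with `m·𝟙_S ∉ W`), for every partition `{i,j,k,s}` of `{1,2,3,4}`:
`1 ≤ l {i,j,k} ≤ l {i,j} ≤ l {i} ≤ r+1`, `l {i} + l {j,k,s} = r+2`, and
`l {i,j} + l {k,s} = r+2`. -/
theorem Ar4_staircase_relations (r : ℕ) (hr : 1 ≤ r) (W : Finset (Fin 4 → ℕ))
    (hW : IsArRegularStaircase r W) (l : Finset (Fin 4) → ℕ)
    (hl : ∀ S : Finset (Fin 4), S.Nonempty →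
      IsLeast {m : ℕ | 0 < m ∧ (fun t => if t ∈ S then m else 0) ∉ W} (l S)) :
    ∀ i j k s : Fin 4, ({i, j, k, s} : Finset (Fin 4)) = Finset.univ →
      1 ≤ l {i, j, k} ∧ l {i, j, k} ≤ l {i, j} ∧ l {i, j} ≤ l {i} ∧ l {i} ≤ r + 1
      ∧ l {i} + l {j, k, s} = r + 2 ∧ l {i, j} + l {k, s} = r + 2 := by
  intro i j k s h
  have hc1 : ({j, k, s} : Finset (Fin 4)) = {i}ᶜ := by revert i j k s; decide
  have hc2 : ({k, s} : Finset (Fin 4)) = {i, j}ᶜ := by revert i j k s; decide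
  have hsum : ∀ S : Finset (Fin 4), S.Nonempty → Sᶜ.Nonempty → l S + l Sᶜ = r + 2 :=
    fun S hS hSc => le_antisymm (hW.add_le hl hS hSc) (hW.le_add hl hS hSc)
  refine ⟨(hl _ (by simp)).1.1, hW.anti hl (by simp) ?_, hW.anti hl (by simp) ?_,
    (hl _ (by simp)).2 ⟨Nat.succ_pos r, hW.indVec_top_notMem (by simp)⟩, ?_, ?_⟩
  · intro t; simp only [Finset.mem_insert, Finset.mem_singleton]; tauto
  · intro t; simp only [Finset.mem_insert, Finset.mem_singleton]; tauto
  · rw [hc1]; exact hsum _ (by simp) (hc1 ▸ by simp)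
  · rw [hc2]; exact hsum _ (by simp) (hc2 ▸ by simp)
end

section
/- A polynomial p ∈ ℂ[Z_1, Z_2, Z_3] is invariant under the three ℂ-algebra automorphisms determined by (Z_1, Z_2, Z_3) ↦ (−Z_1, −Z_2, Z_3), (Z_1, Z_2, Z_3) ↦ (−Z_1, Z_2, −Z_3), and (Z_1, Z_2, Z_3) ↦ (Z_2, Z_3, Z_1) (which generate the standard 3-dimensional representation of the alternating group 𝔄_4) if and only if p lies in the ℂ-subalgebra of ℂ[Z_1, Z_2, Z_3] generated by Y_1 = Z_1² + Z_2² + Z_3², Y_2 = Z_1Z_2Z_3, Y_3 = Z_1²Z_2² + Z_2²Z_3² + Z_3²Z_1², and X = (Z_1² − Z_2²)(Z_2² − Z_3²)(Z_3² − Z_1²). -/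
/-!
One direction is a check on the four generators. For the other, averaging over `𝔄_4` shows that an
invariant `p` is a linear combination of orbit sums of monomials (`reynolds_of_invariant`), so it
suffices that these orbit sums lie in the subalgebra (`reynolds_mem`).

Summing `Z_1^i Z_2^j Z_3^k` over the Klein four-group gives zero unless `i`, `j`, `k` have the same
parity, and four times the monomial otherwise. In the latter case the monomial is `1` or
`Y_2 = Z_1 Z_2 Z_3` times a monomial in the squares `u, v, w` of the variables. What remains is the
cyclic sum `u^a v^b w^c + v^a w^b u^c + w^a u^b v^c`, which is treated in `cyclicSum_mem`. The
elements `u, v, w` are the roots of the cubic `t^3 - e₁ t^2 + e₂ t - e₃` with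
`e₁ = Y_1`, `e₂ = Y_3`, `e₃ = Y_2^2`, so a linear recurrence reduces each exponent to at most `2`.
The finitely many remaining sums are polynomials in `e₁, e₂, e₃`, except for `u^2 v + v^2 w + w^2 u`
and its mirror image, whose sum is `e₁ e₂ - 3 e₃` and whose difference is, up to sign, `X`.
-/

open MvPolynomial

/-- The sum of `u ^ a * v ^ b * w ^ c` over the cyclic rotations of `(u, v, w)`. -/
def cyclicSum {R : Type*} [CommRing R] (u v w : R) (a b c : ℕ) : R :=
  u ^ a * v ^ b * w ^ c + v ^ a * w ^ b * u ^ c + w ^ a * u ^ b * v ^ c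

/-- A subalgebra contains every term of a sequence satisfying a third-order recurrence with
coefficients in the subalgebra, as soon as it contains the first three terms. -/
lemma mem_of_recurrence {R : Type*} [CommRing R] [Algebra ℂ R] (A : Subalgebra ℂ R)
    {e₁ e₂ e₃ : R} (h₁ : e₁ ∈ A) (h₂ : e₂ ∈ A) (h₃ : e₃ ∈ A) (f : ℕ → R)
    (hf : ∀ n, f (n + 3) = e₁ * f (n + 2) - e₂ * f (n + 1) + e₃ * f n)
    (hf₀ : f 0 ∈ A) (hf₁ : f 1 ∈ A) (hf₂ : f 2 ∈ A) (n : ℕ) : f n ∈ A := by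
  have key : f n ∈ A ∧ f (n + 1) ∈ A ∧ f (n + 2) ∈ A := by
    induction n with
    | zero => exact ⟨hf₀, hf₁, hf₂⟩
    | succ n ih =>
      obtain ⟨i₀, i₁, i₂⟩ := ih
      refine ⟨i₁, i₂, ?_⟩
      rw [show n + 1 + 2 = n + 3 from rfl, hf]
      exact add_mem (sub_mem (mul_mem h₁ i₂) (mul_mem h₂ i₁)) (mul_mem h₃ i₀)
  exact key.1

/-- A subalgebra containing the elementary symmetric functions and the discriminant square root of
`u, v, w` contains all cyclic sums of monomials in `u, v, w`. -/
lemma cyclicSum_mem {R : Type*} [CommRing R] [Algebra ℂ R] (A : Subalgebra ℂ R) {u v w : R}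
    (h₁ : u + v + w ∈ A) (h₂ : u * v + v * w + w * u ∈ A) (h₃ : u * v * w ∈ A)
    (hd : (u - v) * (v - w) * (w - u) ∈ A) (a b c : ℕ) : cyclicSum u v w a b c ∈ A := by
  have rot : ∀ a b c, cyclicSum u v w b c a = cyclicSum u v w a b c := by
    intro a b c; simp only [cyclicSum]; ring
  have shift : ∀ a b c, cyclicSum u v w a b c ∈ A →
      cyclicSum u v w (a + 1) (b + 1) (c + 1) ∈ A := by
    intro a b c h
    have : cyclicSum u v w (a + 1) (b + 1) (c + 1) = u * v * w * cyclicSum u v w a b c := by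
      simp only [cyclicSum]; ring
    rw [this]; exact mul_mem h₃ h
  -- the two exceptional sums are only obtained up to a factor of two
  have half : ∀ x : R, 2 * x ∈ A → x ∈ A := by
    intro x hx
    have h := A.smul_mem hx (1 / 2 : ℂ)
    rwa [two_mul, ← two_smul ℂ x, smul_smul, one_div, inv_mul_cancel₀ two_ne_zero,
      one_smul] at h
  have h2 : (2 : R) ∈ A := ofNat_mem A 2
  have h3 : (3 : R) ∈ A := ofNat_mem A 3
  have c000 : cyclicSum u v w 0 0 0 ∈ A := by
    convert h3 using 1; simp only [cyclicSum]; ring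
  have c100 : cyclicSum u v w 1 0 0 ∈ A := by
    convert h₁ using 1; simp only [cyclicSum]; ring
  have c110 : cyclicSum u v w 1 1 0 ∈ A := by
    convert h₂ using 1; simp only [cyclicSum]; ring
  have c200 : cyclicSum u v w 2 0 0 ∈ A := by
    convert sub_mem (mul_mem h₁ h₁) (mul_mem h2 h₂) using 1; simp only [cyclicSum]; ring
  have c220 : cyclicSum u v w 2 2 0 ∈ A := by
    convert sub_mem (mul_mem h₂ h₂) (mul_mem h2 (mul_mem h₁ h₃)) using 1
    simp only [cyclicSum]; ring
  have hs := sub_mem (mul_mem h₁ h₂) (mul_mem h3 h₃)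
  have c210 : cyclicSum u v w 2 1 0 ∈ A := by
    apply half
    convert sub_mem hs hd using 1; simp only [cyclicSum]; ring
  have c120 : cyclicSum u v w 1 2 0 ∈ A := by
    apply half
    convert add_mem hs hd using 1; simp only [cyclicSum]; ring
  have zero : ∀ a b, a ≤ 2 → b ≤ 2 → cyclicSum u v w a b 0 ∈ A := by
    intro a b ha hb
    interval_cases a <;> interval_cases b
    · exact c000
    · rw [rot]; rw [rot]; exact c100
    · rw [rot]; rw [rot]; exact c200
    all_goals assumption
  have small : ∀ a b c, a ≤ 2 → b ≤ 2 → c ≤ 2 → cyclicSum u v w a b c ∈ A := by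
    intro a
    induction a with
    | zero => intro b c _ hb hc; rw [← rot]; exact zero b c hb hc
    | succ a ih =>
      rintro (_ | b) c ha hb hc
      · rw [rot]; exact zero c (a + 1) hc ha
      · rcases c with _ | c
        · exact zero _ _ ha hb
        · exact shift _ _ _ (ih b c (by omega) (by omega) (by omega))
  have first : ∀ b c, b ≤ 2 → c ≤ 2 → ∀ a, cyclicSum u v w a b c ∈ A := by
    intro b c hb hc
    refine mem_of_recurrence A h₁ h₂ h₃ (fun n => cyclicSum u v w n b c) ?_
      (small _ _ _ (by omega) hb hc) (small _ _ _ (by omega) hb hc) (small _ _ _ (by omega) hb hc)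
    intro n; simp only [cyclicSum]; ring
  have second : ∀ c, c ≤ 2 → ∀ a b, cyclicSum u v w a b c ∈ A := by
    intro c hc a
    refine mem_of_recurrence A h₁ h₂ h₃ (fun n => cyclicSum u v w a n c) ?_
      (first _ _ (by omega) hc _) (first _ _ (by omega) hc _) (first _ _ (by omega) hc _)
    intro n; simp only [cyclicSum]; ring
  refine mem_of_recurrence A h₁ h₂ h₃ (fun n => cyclicSum u v w a b n) ?_
      (second _ (by omega) _ _) (second _ (by omega) _ _) (second _ (by omega) _ _) c
  intro n; simp only [cyclicSum]; ring

/-- The sum of the images of `p` under the Klein four-group of even sign changes. -/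
noncomputable def kleinSum (p : MvPolynomial (Fin 3) ℂ) : MvPolynomial (Fin 3) ℂ :=
  p + aeval ![-X 0, -X 1, X 2] p + aeval ![-X 0, X 1, -X 2] p
    + aeval ![X 0, -X 1, -X 2] p

/-- The action of the 3-cycle `(123)`. -/
noncomputable abbrev threeCycle : MvPolynomial (Fin 3) ℂ →ₐ[ℂ] MvPolynomial (Fin 3) ℂ :=
  aeval ![X 1, X 2, X 0]

/-- The sum of the images of `p` under the twelve elements of `𝔄_4`, that is, twelve times the
Reynolds operator. -/
noncomputable def reynolds (p : MvPolynomial (Fin 3) ℂ) : MvPolynomial (Fin 3) ℂ :=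
  kleinSum p + threeCycle (kleinSum p) + threeCycle (threeCycle (kleinSum p))

lemma reynolds_add (p q : MvPolynomial (Fin 3) ℂ) :
    reynolds (p + q) = reynolds p + reynolds q := by
  simp only [reynolds, kleinSum, map_add]; ring

lemma reynolds_of_invariant {p : MvPolynomial (Fin 3) ℂ}
    (h₁ : aeval ![-X 0, -X 1, X 2] p = p) (h₂ : aeval ![-X 0, X 1, -X 2] p = p)
    (h₃ : aeval ![X 1, X 2, X 0] p = p) : reynolds p = 12 * p := by
  -- the third sign change is the composite of the two given ones
  have h₄ : aeval ![X 0, -X 1, -X 2] p = p := by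
    have hc : (aeval ![X 0, -X 1, -X 2] : MvPolynomial (Fin 3) ℂ →ₐ[ℂ] MvPolynomial (Fin 3) ℂ)
        = (aeval ![-X 0, -X 1, X 2]).comp (aeval ![-X 0, X 1, -X 2]) := by
      ext i : 1
      fin_cases i <;> simp
    rw [hc, AlgHom.comp_apply, h₂, h₁]
  have hk : kleinSum p = 4 * p := by rw [kleinSum, h₁, h₂, h₄]; ring
  rw [reynolds, hk]
  simp only [map_mul, h₃, map_ofNat]; ring

lemma monomial_eq_three (s : Fin 3 →₀ ℕ) (r : ℂ) :
    monomial s r = C r * (X 0 ^ s 0 * X 1 ^ s 1 * X 2 ^ s 2) := by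
  rw [monomial_eq, Finsupp.prod_fintype _ _ (fun i => pow_zero _), Fin.prod_univ_three]

/-- The Klein four-group sum of a monomial vanishes unless the exponents have the same parity. -/
lemma kleinSum_monomial (r : ℂ) (i j k : ℕ) :
    kleinSum (C r * (X 0 ^ i * X 1 ^ j * X 2 ^ k)) = 0 ∨
    ∃ d a b c : ℕ, kleinSum (C r * (X 0 ^ i * X 1 ^ j * X 2 ^ k)) =
      C (4 * r) * ((X 0 * X 1 * X 2) ^ d *
        ((X 0 ^ 2) ^ a * (X 1 ^ 2) ^ b * (X 2 ^ 2) ^ c)) := by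
  have h4 : (C (4 * r) : MvPolynomial (Fin 3) ℂ) = 4 * C r := by rw [C_mul]; rfl
  have hx : kleinSum (C r * (X 0 ^ i * X 1 ^ j * X 2 ^ k)) =
      (1 + (-1) ^ i * (-1) ^ j + (-1) ^ i * (-1) ^ k + (-1) ^ j * (-1) ^ k) *
        (C r * (X 0 ^ i * X 1 ^ j * X 2 ^ k)) := by
    simp only [kleinSum, map_mul, map_pow, aeval_X, algHom_C, algebraMap_eq, Matrix.cons_val]
    rw [neg_pow (X 0 : MvPolynomial (Fin 3) ℂ) i, neg_pow (X 1 : MvPolynomial (Fin 3) ℂ) j,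
      neg_pow (X 2 : MvPolynomial (Fin 3) ℂ) k]
    ring
  rw [hx, h4]
  rcases Nat.even_or_odd' i with ⟨a, rfl | rfl⟩ <;>
  rcases Nat.even_or_odd' j with ⟨b, rfl | rfl⟩ <;>
  rcases Nat.even_or_odd' k with ⟨c, rfl | rfl⟩ <;>
  simp only [pow_succ, pow_mul, pow_zero, one_mul]
  · exact Or.inr ⟨0, a, b, c, by ring⟩
  · left; ring
  · left; ring
  · left; ring
  · left; ring
  · left; ring
  · left; ring
  · exact Or.inr ⟨1, a, b, c, by ring⟩

lemma reynolds_mem (A : Subalgebra ℂ (MvPolynomial (Fin 3) ℂ))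
    (h₁ : X 0 ^ 2 + X 1 ^ 2 + X 2 ^ 2 ∈ A) (h₂ : X 0 * X 1 * X 2 ∈ A)
    (h₃ : X 0 ^ 2 * X 1 ^ 2 + X 1 ^ 2 * X 2 ^ 2 + X 2 ^ 2 * X 0 ^ 2 ∈ A)
    (hd : (X 0 ^ 2 - X 1 ^ 2) * (X 1 ^ 2 - X 2 ^ 2) * (X 2 ^ 2 - X 0 ^ 2) ∈ A)
    (p : MvPolynomial (Fin 3) ℂ) : reynolds p ∈ A := by
  induction p using MvPolynomial.induction_on' with
  | add p q hp hq => rw [reynolds_add]; exact add_mem hp hq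
  | monomial s r =>
    rw [monomial_eq_three, reynolds]
    rcases kleinSum_monomial r (s 0) (s 1) (s 2) with h | ⟨d, a, b, c, h⟩
    · rw [h]; simp
    · rw [h]
      have hsq : (X 0 ^ 2 * X 1 ^ 2 * X 2 ^ 2 : MvPolynomial (Fin 3) ℂ) ∈ A := by
        convert pow_mem h₂ 2 using 1; ring
      have hr : (C (4 * r) : MvPolynomial (Fin 3) ℂ) ∈ A := A.algebraMap_mem (4 * r)
      convert mul_mem hr (mul_mem (pow_mem h₂ d) (cyclicSum_mem A h₁ h₃ hsq hd a b c)) using 1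
      simp only [map_mul, map_pow, aeval_X, algHom_C, algebraMap_eq, Matrix.cons_val, cyclicSum]
      ring

/-- A polynomial `p ∈ ℂ[Z_1,Z_2,Z_3]` is invariant under the standard 3-dimensional
representation of the alternating group `𝔄_4` (generated by the substitutions
`(Z_1,Z_2,Z_3) ↦ (−Z_1,−Z_2,Z_3)`, `(−Z_1,Z_2,−Z_3)` and `(Z_2,Z_3,Z_1)`) iff it lies
in the subalgebra generated by `Y_1, Y_2, Y_3, X`.  Variables: `Z_1 = X 0`, `Z_2 = X 1`,
`Z_3 = X 2`. -/
theorem A4_invariants (p : MvPolynomial (Fin 3) ℂ) :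
    (MvPolynomial.aeval ![-X 0, -X 1, X 2] p = p
      ∧ MvPolynomial.aeval ![-X 0, X 1, -X 2] p = p
      ∧ MvPolynomial.aeval ![X 1, X 2, X 0] p = p)
    ↔ p ∈ Algebra.adjoin ℂ
        ({X 0 ^ 2 + X 1 ^ 2 + X 2 ^ 2,
          X 0 * X 1 * X 2,
          X 0 ^ 2 * X 1 ^ 2 + X 1 ^ 2 * X 2 ^ 2 + X 2 ^ 2 * X 0 ^ 2,
          (X 0 ^ 2 - X 1 ^ 2) * (X 1 ^ 2 - X 2 ^ 2) * (X 2 ^ 2 - X 0 ^ 2)} :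
          Set (MvPolynomial (Fin 3) ℂ)) := by
  constructor
  · rintro ⟨h₁, h₂, h₃⟩
    have e : p = (1 / 12 : ℂ) • reynolds p := by
      rw [reynolds_of_invariant h₁ h₂ h₃, smul_eq_C_mul, ← mul_assoc,
        show (12 : MvPolynomial (Fin 3) ℂ) = C 12 from rfl, ← C_mul]
      norm_num
    rw [e]
    refine Subalgebra.smul_mem _ (reynolds_mem _ ?_ ?_ ?_ ?_ p) _
    · exact Algebra.subset_adjoin (Or.inl rfl)
    · exact Algebra.subset_adjoin (Or.inr (Or.inl rfl))
    · exact Algebra.subset_adjoin (Or.inr (Or.inr (Or.inl rfl)))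
    · exact Algebra.subset_adjoin (Or.inr (Or.inr (Or.inr rfl)))
  · intro hp
    -- an algebra endomorphism fixing the generators fixes the subalgebra they generate
    refine ⟨?_, ?_, ?_⟩ <;>
    · refine Algebra.adjoin_le (S := AlgHom.equalizer (aeval _) (AlgHom.id ℂ _)) ?_ hp
      rintro q (rfl | rfl | rfl | rfl) <;>
      · simp only [SetLike.mem_coe, AlgHom.mem_equalizer, AlgHom.id_apply, map_add, map_sub,
          map_mul, map_pow, aeval_X, Matrix.cons_val]
        ring
end

section
/- Let ω ∈ ℂ satisfy ω² + ω + 1 = 0. For all complex numbers v_0, v_1, v_2, define η_1 = (1/3)v_2² + v_0v_1 − v_0v_1², η_2 = (1/27)·v_2·(3v_0 − 3v_0v_1 − v_2² + 3v_0v_1²), η_3 = (1/27)·(3v_0v_1² − v_2²)·(3v_0v_1² − 3v_0v_1 − v_2² + 3v_0), and ξ = ((ω − ω²)/81)·v_0·(v_1 + 1)·(3v_0v_1² + 3v_0 − 3v_0v_1 − v_2²)·(3v_0v_1³ − v_2² − v_1v_2²). Then ξ² = −4·η_1³·η_2² − 27·η_2⁴ + 18·η_1·η_2²·η_3 + η_1²·η_3²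 − 4·η_3³. -/
/-- The coordinate chart `(v_0, v_1, v_2)` of `Hilb^{𝔄_4}(ℂ³)` centered at `x_∞` maps
into the hypersurface `ξ² = −4η₁³η₂² − 27η₂⁴ + 18η₁η₂²η₃ + η₁²η₃² − 4η₃³` realizing
`ℂ³/𝔄_4`, where `ω` is a primitive cube root of unity. -/
theorem A4_chart_xinfty_equation (ω v0 v1 v2 η1 η2 η3 ξ : ℂ)
    (hω : ω ^ 2 + ω + 1 = 0)
    (hη1 : η1 = (1 / 3) * v2 ^ 2 + v0 * v1 - v0 * v1 ^ 2)
    (hη2 : η2 = (1 / 27) * v2 * (3 * v0 - 3 * v0 * v1 - v2 ^ 2 + 3 * v0 * v1 ^ 2))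
    (hη3 : η3 = (1 / 27) * (3 * v0 * v1 ^ 2 - v2 ^ 2)
        * (3 * v0 * v1 ^ 2 - 3 * v0 * v1 - v2 ^ 2 + 3 * v0))
    (hξ : ξ = ((ω - ω ^ 2) / 81) * v0 * (v1 + 1)
        * (3 * v0 * v1 ^ 2 + 3 * v0 - 3 * v0 * v1 - v2 ^ 2)
        * (3 * v0 * v1 ^ 3 - v2 ^ 2 - v1 * v2 ^ 2)) :
    ξ ^ 2 = -4 * η1 ^ 3 * η2 ^ 2 - 27 * η2 ^ 4 + 18 * η1 * η2 ^ 2 * η3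
      + η1 ^ 2 * η3 ^ 2 - 4 * η3 ^ 3 := by
  -- `ω - ω²` is a square root of `-3`, so `ω` drops out of `ξ²`.
  have hs : (ω - ω ^ 2) ^ 2 = -3 := by
    linear_combination (ω ^ 2 - 3 * ω + 3) * hω
  subst hη1 hη2 hη3 hξ
  linear_combination (v0 * (v1 + 1) * (3 * v0 * v1 ^ 2 + 3 * v0 - 3 * v0 * v1 - v2 ^ 2)
    * (3 * v0 * v1 ^ 3 - v2 ^ 2 - v1 * v2 ^ 2) / 81) ^ 2 * hs
end
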